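/- arXiv:2101.05248 — 6 statements merged into one kernel-verified Lean document; each statement's English description precedes it below -/
import Mathlib

section
/- Let L : ℝ^n × ℝ^m → ℝ be C¹ and convex-concave with saddle point (p,q). For each i ∈ {1,…,n} let w_i : ℝ → ℝ be continuous and strictly positive on an open interval I_i containing p_i, and for each j ∈ {1,…,m} let v_j : ℝ → ℝ be continuous and strictly positive on an open interval J_j containing q_j. Consider the weighted gradient descent ascent dynamics ẋ_i(t) = −w_i(x_i(t))·(∂L/∂x_i)(x(t),y(t)), ẏ_j(t) = v_j(y_j(t))·(∂L/∂y_j)(x(t),y(t)) on the open box D = I_1×⋯×I_n × J_1×⋯×J_m. Then (p,q) is a stable equilibrium of this system: for every ε > 0 there exists δ > 0 such that every C¹ solution (x,y) defined for t ≥ 0 taking values in D with ‖(x(0),y(0)) − (p,q)‖ < δ satisfies ‖(x(t),y(t)) − (p,q)‖ < ε for all t ≥ 0. -/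
/-!
Dividing out the weights, `Φ(z) = ∫ s in p..z, (s - p) / w s` has a strict minimum at `p` on the
interval where `w` lives, and along `ż = -w(z) g` it satisfies `d/dt Φ(z) = -(z - p) g`. Summing
over all coordinates gives a Lyapunov function whose derivative is
`-(⟪∇ₓL, x - p⟫ - ⟪∇ᵧL, y - q⟫)`. By the gradient inequalities for `L(·, y)` and `L(x, ·)` this is
at most `L(p, y) - L(x, q)`, which is nonpositive at a saddle point.
-/

open Set Filter Topology

section StrictWell

/-- `p` is a strict well of `V` on `D`: the sublevel sets of `V` in `D` just above the level `V p`
shrink to `p`. This is the positive definiteness required of a Lyapunov function, in a form that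
keeps trajectories from escaping towards the boundary of a non-compact `D`. -/
def IsStrictWellOn {X : Type*} [TopologicalSpace X] (V : X → ℝ) (D : Set X) (p : X) : Prop :=
  ∀ U ∈ 𝓝 p, ∀ᶠ r in 𝓝[>] (0 : ℝ), ∀ z ∈ D, V z < V p + r → z ∈ U

theorem IsStrictWellOn.le {X : Type*} [TopologicalSpace X] [T1Space X] {V : X → ℝ} {D : Set X}
    {p z : X} (h : IsStrictWellOn V D p) (hz : z ∈ D) : V p ≤ V z := by
  by_contra! hlt
  have hpz : p ≠ z := fun hpz => hlt.ne (congrArg V hpz.symm)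
  obtain ⟨r, hr, hr₀ : 0 < r⟩ :=
    ((h _ (isOpen_compl_singleton.mem_nhds hpz)).and self_mem_nhdsWithin).exists
  exact hr z hz (hlt.trans (lt_add_of_pos_right _ hr₀)) rfl

theorem IsStrictWellOn.pi_sum {ι : Type*} [Fintype ι] {X : ι → Type*}
    [∀ i, TopologicalSpace (X i)] [∀ i, T1Space (X i)] {f : ∀ i, X i → ℝ} {I : ∀ i, Set (X i)}
    {p : ∀ i, X i} (h : ∀ i, IsStrictWellOn (f i) (I i) (p i)) :
    IsStrictWellOn (fun z => ∑ i, f i (z i)) (univ.pi I) p := by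
  intro U hU
  rw [nhds_pi, Filter.mem_pi'] at hU
  obtain ⟨S, T, hT, hTU⟩ := hU
  filter_upwards [eventually_all.2 fun i => h i (T i) (hT i)] with r hr z hz hlt
  have hgap_nonneg : ∀ j ∈ Finset.univ, 0 ≤ f j (z j) - f j (p j) := fun j _ =>
    sub_nonneg.2 ((h j).le (hz j (mem_univ j)))
  have hgap_sum : ∑ j, (f j (z j) - f j (p j)) < r := by
    rw [Finset.sum_sub_distrib]
    linarith
  refine hTU fun i _ => hr i (z i) (hz i (mem_univ i)) ?_
  linarith [Finset.single_le_sum hgap_nonneg (Finset.mem_univ i)]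

theorem isStrictWellOn_of_strictAntiOn_of_strictMonoOn {α : Type*} [LinearOrder α]
    [TopologicalSpace α] [OrderTopology α] [DenselyOrdered α] [NoMinOrder α] [NoMaxOrder α]
    {f : α → ℝ} {I : Set α} {p : α} (hI : I ∈ 𝓝 p) (hanti : StrictAntiOn f (I ∩ Iic p))
    (hmono : StrictMonoOn f (I ∩ Ici p)) : IsStrictWellOn f I p := by
  intro U hU
  have hp : p ∈ I := mem_of_mem_nhds hI
  obtain ⟨l, u, ⟨hlp, hpu⟩, hsub⟩ := mem_nhds_iff_exists_Ioo_subset.1 (inter_mem hU hI)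
  obtain ⟨l', hll', hl'p⟩ := exists_between hlp
  obtain ⟨u', hpu', hu'u⟩ := exists_between hpu
  have hl' : l' ∈ I ∩ Iic p := ⟨(hsub ⟨hll', hl'p.trans hpu⟩).2, hl'p.le⟩
  have hu' : u' ∈ I ∩ Ici p := ⟨(hsub ⟨hlp.trans hpu', hu'u⟩).2, hpu'.le⟩
  have hfl' : 0 < f l' - f p := sub_pos.2 (hanti hl' ⟨hp, le_rfl⟩ hl'p)
  have hfu' : 0 < f u' - f p := sub_pos.2 (hmono ⟨hp, le_rfl⟩ hu' hpu')
  filter_upwards [Ioo_mem_nhdsGT (lt_min hfl' hfu')] with r hr z hz hlt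
  obtain ⟨hrl', hru'⟩ := lt_min_iff.1 hr.2
  refine (hsub ⟨lt_of_not_ge fun hzl => ?_, lt_of_not_ge fun huz => ?_⟩).1
  · have hzl' := hzl.trans hll'.le
    linarith [hanti.antitoneOn ⟨hz, hzl'.trans hl'p.le⟩ hl' hzl']
  · have huz' := hu'u.le.trans huz
    linarith [hmono.monotoneOn hu' ⟨hz, hpu'.le.trans huz'⟩ huz']

theorem IsStrictWellOn.exists_mem_nhds_forall_mem {X T : Type*} [TopologicalSpace X] [Preorder T]
    {V : X → ℝ} {D : Set X} {p : X} (h : IsStrictWellOn V D p) (hV : ContinuousAt V p) (t₀ : T)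
    {U : Set X} (hU : U ∈ 𝓝 p) :
    ∃ W ∈ 𝓝 p, ∀ z : T → X, (∀ t ≥ t₀, z t ∈ D) → AntitoneOn (fun t => V (z t)) (Ici t₀) →
      z t₀ ∈ W → ∀ t ≥ t₀, z t ∈ U := by
  obtain ⟨r, hr, hr₀ : 0 < r⟩ := ((h U hU).and self_mem_nhdsWithin).exists
  refine ⟨{x | V x < V p + r}, hV.eventually_lt_const (lt_add_of_pos_right _ hr₀),
    fun z hzD hanti hz₀ t ht => hr _ (hzD t ht) ?_⟩
  exact (hanti self_mem_Ici ht ht).trans_lt hz₀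

end StrictWell

/-- A weight on an open interval: `w` is continuous and positive on the open order-connected
set `I`. -/
structure IsWeightOn (w : ℝ → ℝ) (I : Set ℝ) : Prop where
  isOpen : IsOpen I
  ordConnected : I.OrdConnected
  continuousOn : ContinuousOn w I
  pos : ∀ z ∈ I, 0 < w z

/-- The primitive of `(z - p) / w z` vanishing at `p`, the contribution of one coordinate to the
Lyapunov function. For `w = 1` it is `(z - p) ^ 2 / 2`. -/
noncomputable def weightPotential (w : ℝ → ℝ) (p z : ℝ) : ℝ :=
  ∫ s in p..z, (s - p) / w s

namespace IsWeightOn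

variable {w : ℝ → ℝ} {I : Set ℝ} {p z : ℝ}

theorem hasDerivAt_weightPotential (hw : IsWeightOn w I) (hp : p ∈ I) (hz : z ∈ I) :
    HasDerivAt (weightPotential w p) ((z - p) / w z) z := by
  have hcont : ContinuousOn (fun s => (s - p) / w s) I :=
    (by fun_prop : ContinuousOn (fun s : ℝ => s - p) I).div hw.continuousOn
      fun s hs => (hw.pos s hs).ne'
  exact intervalIntegral.integral_hasDerivAt_right
    (hcont.mono (hw.ordConnected.uIcc_subset hp hz)).intervalIntegrable
    (hcont.stronglyMeasurableAtFilter hw.isOpen z hz)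
    (hcont.continuousAt (hw.isOpen.mem_nhds hz))

theorem strictMonoOn_weightPotential (hw : IsWeightOn w I) (hp : p ∈ I) :
    StrictMonoOn (weightPotential w p) (I ∩ Ici p) := by
  refine strictMonoOn_of_hasDerivWithinAt_pos (hw.ordConnected.inter ordConnected_Ici).convex
    (fun z hz => (hw.hasDerivAt_weightPotential hp hz.1).continuousAt.continuousWithinAt)
    (fun z hz => (hw.hasDerivAt_weightPotential hp (interior_subset hz).1).hasDerivWithinAt)
    fun z hz => ?_
  rw [interior_inter, interior_Ici] at hz
  exact div_pos (sub_pos.2 hz.2) (hw.pos z (interior_subset hz.1))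

theorem strictAntiOn_weightPotential (hw : IsWeightOn w I) (hp : p ∈ I) :
    StrictAntiOn (weightPotential w p) (I ∩ Iic p) := by
  refine strictAntiOn_of_hasDerivWithinAt_neg (hw.ordConnected.inter ordConnected_Iic).convex
    (fun z hz => (hw.hasDerivAt_weightPotential hp hz.1).continuousAt.continuousWithinAt)
    (fun z hz => (hw.hasDerivAt_weightPotential hp (interior_subset hz).1).hasDerivWithinAt)
    fun z hz => ?_
  rw [interior_inter, interior_Iic] at hz
  exact div_neg_of_neg_of_pos (sub_neg.2 hz.2) (hw.pos z (interior_subset hz.1))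

theorem isStrictWellOn_weightPotential (hw : IsWeightOn w I) (hp : p ∈ I) :
    IsStrictWellOn (weightPotential w p) I p :=
  isStrictWellOn_of_strictAntiOn_of_strictMonoOn (hw.isOpen.mem_nhds hp)
    (hw.strictAntiOn_weightPotential hp) (hw.strictMonoOn_weightPotential hp)

theorem hasDerivWithinAt_weightPotential_comp (hw : IsWeightOn w I) (hp : p ∈ I) {u : ℝ → ℝ}
    {g t : ℝ} {S : Set ℝ} (hut : u t ∈ I) (hu : HasDerivWithinAt u (-(w (u t) * g)) S t) :
    HasDerivWithinAt (fun s => weightPotential w p (u s)) (-(g * (u t - p))) S t := by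
  refine ((hw.hasDerivAt_weightPotential hp hut).comp_hasDerivWithinAt t hu).congr_deriv ?_
  have hwt := (hw.pos _ hut).ne'
  field_simp

end IsWeightOn

section WeightedFlow

variable {ι : Type*} [Fintype ι] {w : ι → ℝ → ℝ} {I : ι → Set ℝ} {p : ι → ℝ}

theorem antitoneOn_sum_weightPotential (hw : ∀ i, IsWeightOn (w i) (I i)) (hp : p ∈ univ.pi I)
    {z g : ℝ → ι → ℝ} (hz : ∀ t ≥ 0, z t ∈ univ.pi I)
    (hderiv : ∀ t ≥ 0, ∀ i,
      HasDerivWithinAt (fun s => z s i) (-(w i (z t i) * g t i)) (Ici 0) t)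
    (hg : ∀ t ≥ 0, 0 ≤ ∑ i, g t i * (z t i - p i)) :
    AntitoneOn (fun t => ∑ i, weightPotential (w i) (p i) (z t i)) (Ici 0) := by
  have hsum : ∀ t ∈ Ici (0 : ℝ),
      HasDerivWithinAt (fun s => ∑ i, weightPotential (w i) (p i) (z s i))
        (∑ i, -(g t i * (z t i - p i))) (Ici 0) t := fun t ht =>
    HasDerivWithinAt.fun_sum fun i _ => (hw i).hasDerivWithinAt_weightPotential_comp
      (hp i (mem_univ i)) (hz t ht i (mem_univ i)) (hderiv t ht i)
  refine antitoneOn_of_hasDerivWithinAt_nonpos (convex_Ici 0)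
    (fun t ht => (hsum t ht).continuousWithinAt)
    (fun t ht => (hsum t (interior_subset ht)).mono interior_subset) fun t ht => ?_
  rw [Finset.sum_neg_distrib]
  exact neg_nonpos.2 (hg t (interior_subset ht))

theorem exists_mem_nhds_forall_weighted_flow_mem (hw : ∀ i, IsWeightOn (w i) (I i))
    (hp : p ∈ univ.pi I) {U : Set (ι → ℝ)} (hU : U ∈ 𝓝 p) :
    ∃ W ∈ 𝓝 p, ∀ z g : ℝ → ι → ℝ, (∀ t ≥ 0, z t ∈ univ.pi I) →
      (∀ t ≥ 0, ∀ i, HasDerivWithinAt (fun s => z s i) (-(w i (z t i) * g t i)) (Ici 0) t) →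
      (∀ t ≥ 0, 0 ≤ ∑ i, g t i * (z t i - p i)) →
      z 0 ∈ W → ∀ t ≥ 0, z t ∈ U := by
  have hpI : ∀ i, p i ∈ I i := fun i => hp i (mem_univ i)
  have hwell : IsStrictWellOn (fun z => ∑ i, weightPotential (w i) (p i) (z i)) (univ.pi I) p :=
    .pi_sum fun i => (hw i).isStrictWellOn_weightPotential (hpI i)
  have hcont : ContinuousAt (fun z : ι → ℝ => ∑ i, weightPotential (w i) (p i) (z i)) p :=
    tendsto_finsetSum _ fun i _ =>
      ((hw i).hasDerivAt_weightPotential (hpI i) (hpI i)).continuousAt.tendsto.comp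
        (continuousAt_apply i p)
  obtain ⟨W, hW, hstay⟩ := hwell.exists_mem_nhds_forall_mem hcont (0 : ℝ) hU
  exact ⟨W, hW, fun z g hz hderiv hg =>
    hstay z hz (antitoneOn_sum_weightPotential hw hp hz hderiv hg)⟩

end WeightedFlow

section GradientInequality

theorem apply_sub_le_sub_of_convexOn_of_hasFDerivAt {E : Type*} [NormedAddCommGroup E]
    [NormedSpace ℝ E] {s : Set E} {f : E → ℝ} {f' : E →L[ℝ] ℝ} {x p : E}
    (hf : ConvexOn ℝ s f) (hx : x ∈ s) (hp : p ∈ s) (hf' : HasFDerivAt f f' x) :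
    f' (p - x) ≤ f p - f x := by
  let l : ℝ →ᵃ[ℝ] E := AffineMap.lineMap x p
  have hl₀ : l 0 = x := AffineMap.lineMap_apply_zero x p
  have hl₁ : l 1 = p := AffineMap.lineMap_apply_one x p
  have hderiv : HasDerivAt (f ∘ l) (f' (p - x)) 0 :=
    HasFDerivAt.comp_hasDerivAt 0 (hl₀.symm ▸ hf') AffineMap.hasDerivAt_lineMap
  have hslope := (hf.comp_affineMap l).le_slope_of_hasDerivAt (x := 0) (y := 1)
    (by rwa [mem_preimage, hl₀]) (by rwa [mem_preimage, hl₁]) zero_lt_one hderiv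
  simpa [slope_def_field, hl₀, hl₁] using hslope

variable {ι κ : Type*} [Fintype ι] [Fintype κ]

theorem sum_gradient_mul_sub_eq_fderiv (f : EuclideanSpace ℝ ι → ℝ) (x p : EuclideanSpace ℝ ι) :
    ∑ i, gradient f x i * (x i - p i) = fderiv ℝ f x (x - p) := by
  rw [← inner_gradient_left, PiLp.inner_apply]
  exact Finset.sum_congr rfl fun i _ => mul_comm _ _

theorem sub_le_sum_gradient_mul_sub_of_convexOn {s : Set (EuclideanSpace ℝ ι)}
    {f : EuclideanSpace ℝ ι → ℝ} {x p : EuclideanSpace ℝ ι} (hf : ConvexOn ℝ s f) (hx : x ∈ s)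
    (hp : p ∈ s) (hfx : DifferentiableAt ℝ f x) :
    f x - f p ≤ ∑ i, gradient f x i * (x i - p i) := by
  have h := apply_sub_le_sub_of_convexOn_of_hasFDerivAt hf hx hp hfx.hasFDerivAt
  rw [← neg_sub x p, map_neg] at h
  rw [sum_gradient_mul_sub_eq_fderiv]
  linarith

theorem sum_gradient_mul_sub_le_sub_of_concaveOn {s : Set (EuclideanSpace ℝ ι)}
    {f : EuclideanSpace ℝ ι → ℝ} {x p : EuclideanSpace ℝ ι} (hf : ConcaveOn ℝ s f) (hx : x ∈ s)
    (hp : p ∈ s) (hfx : DifferentiableAt ℝ f x) :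
    ∑ i, gradient f x i * (x i - p i) ≤ f x - f p := by
  have h : -fderiv ℝ f x (p - x) ≤ -f p - -f x :=
    apply_sub_le_sub_of_convexOn_of_hasFDerivAt hf.neg hx hp hfx.hasFDerivAt.neg
  rw [← neg_sub x p, map_neg] at h
  rw [sum_gradient_mul_sub_eq_fderiv]
  linarith

theorem sum_gradient_mul_sub_le_sum_gradient_mul_sub_of_isSaddlePointOn
    {X : Set (EuclideanSpace ℝ ι)} {Y : Set (EuclideanSpace ℝ κ)}
    {L : EuclideanSpace ℝ ι → EuclideanSpace ℝ κ → ℝ} {p x : EuclideanSpace ℝ ι}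
    {q y : EuclideanSpace ℝ κ} (hL : IsSaddlePointOn X Y L p q) (hp : p ∈ X) (hq : q ∈ Y)
    (hx : x ∈ X) (hy : y ∈ Y) (hconv : ConvexOn ℝ X fun x' => L x' y)
    (hconc : ConcaveOn ℝ Y (L x)) (hdx : DifferentiableAt ℝ (fun x' => L x' y) x)
    (hdy : DifferentiableAt ℝ (L x) y) :
    ∑ j, gradient (L x) y j * (y j - q j) ≤
      ∑ i, gradient (fun x' => L x' y) x i * (x i - p i) :=
  calc ∑ j, gradient (L x) y j * (y j - q j)
      ≤ L x y - L x q := sum_gradient_mul_sub_le_sub_of_concaveOn hconc hy hq hdy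
    _ ≤ L x y - L p y := sub_le_sub_left (hL x hx y hy) _
    _ ≤ ∑ i, gradient (fun x' => L x' y) x i * (x i - p i) :=
      sub_le_sum_gradient_mul_sub_of_convexOn hconv hx hp hdx

end GradientInequality

section Stability

variable {ι κ : Type*}

/-- The product of the sets `I i`, as a subset of Euclidean space: the output space of one
player. -/
def coordBox (I : ι → Set ℝ) : Set (EuclideanSpace ℝ ι) :=
  {x | ∀ i, x i ∈ I i}

theorem convex_coordBox {I : ι → Set ℝ} (hI : ∀ i, Convex ℝ (I i)) : Convex ℝ (coordBox I) :=
  fun _ hx _ hy _ _ ha hb hab i => hI i (hx i) (hy i) ha hb hab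

/-- Stacks the coordinates of the two players, turning descent-ascent into one weighted flow. -/
noncomputable def stackHomeomorph (ι κ : Type*) :
    EuclideanSpace ℝ ι × EuclideanSpace ℝ κ ≃ₜ (ι ⊕ κ → ℝ) :=
  ((PiLp.homeomorph 2 _).prodCongr (PiLp.homeomorph 2 _)).trans
    Homeomorph.sumArrowHomeomorphProdArrow.symm

@[simp]
theorem stackHomeomorph_inl (z : EuclideanSpace ℝ ι × EuclideanSpace ℝ κ) (i : ι) :
    stackHomeomorph ι κ z (Sum.inl i) = z.1 i :=
  rfl

@[simp]
theorem stackHomeomorph_inr (z : EuclideanSpace ℝ ι × EuclideanSpace ℝ κ) (j : κ) :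
    stackHomeomorph ι κ z (Sum.inr j) = z.2 j :=
  rfl

variable [Fintype ι] [Fintype κ]

theorem weighted_gda_stable_general {L : EuclideanSpace ℝ ι → EuclideanSpace ℝ κ → ℝ}
    {w : ι → ℝ → ℝ} {v : κ → ℝ → ℝ} {I : ι → Set ℝ} {J : κ → Set ℝ}
    {p : EuclideanSpace ℝ ι} {q : EuclideanSpace ℝ κ}
    (hdx : ∀ x ∈ coordBox I, ∀ y ∈ coordBox J, DifferentiableAt ℝ (fun x' => L x' y) x)
    (hdy : ∀ x ∈ coordBox I, ∀ y ∈ coordBox J, DifferentiableAt ℝ (L x) y)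
    (hconv : ∀ y ∈ coordBox J, ConvexOn ℝ (coordBox I) fun x => L x y)
    (hconc : ∀ x ∈ coordBox I, ConcaveOn ℝ (coordBox J) (L x))
    (hp : p ∈ coordBox I) (hq : q ∈ coordBox J)
    (hsaddle : IsSaddlePointOn (coordBox I) (coordBox J) L p q)
    (hw : ∀ i, IsWeightOn (w i) (I i)) (hv : ∀ j, IsWeightOn (v j) (J j)) :
    ∀ ε > 0, ∃ δ > 0, ∀ (x : ℝ → EuclideanSpace ℝ ι) (y : ℝ → EuclideanSpace ℝ κ),
      (∀ t ≥ 0, x t ∈ coordBox I ∧ y t ∈ coordBox J) →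
      (∀ i, ∀ t ≥ 0, HasDerivWithinAt (fun s => x s i)
        (-(w i (x t i) * gradient (fun x' => L x' (y t)) (x t) i)) (Ici 0) t) →
      (∀ j, ∀ t ≥ 0, HasDerivWithinAt (fun s => y s j)
        (v j (y t j) * gradient (L (x t)) (y t) j) (Ici 0) t) →
      dist (x 0, y 0) (p, q) < δ → ∀ t ≥ 0, dist (x t, y t) (p, q) < ε := by
  intro ε hε
  let e := stackHomeomorph ι κ
  obtain ⟨W, hW, hstay⟩ := exists_mem_nhds_forall_weighted_flow_mem (w := Sum.elim w v)
    (I := Sum.elim I J) (p := e (p, q)) (Sum.rec hw hv)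
    (fun k _ => k.rec hp hq) (e.isOpenMap.image_mem_nhds (Metric.ball_mem_nhds (p, q) hε))
  obtain ⟨δ, hδ, hball⟩ := Metric.mem_nhds_iff.1 (e.continuous.continuousAt hW)
  refine ⟨δ, hδ, fun x y hbox hx hy h₀ t ht => ?_⟩
  let gx : ℝ → EuclideanSpace ℝ ι := fun s => gradient (fun x' => L x' (y s)) (x s)
  let gy : ℝ → EuclideanSpace ℝ κ := fun s => gradient (L (x s)) (y s)
  have hderiv : ∀ s ≥ 0, ∀ k, HasDerivWithinAt (fun s => e (x s, y s) k)
      (-(Sum.elim w v k (e (x s, y s) k) * Sum.elim (gx s) (-gy s) k)) (Ici 0) s := by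
    rintro s hs (i | j)
    · exact hx i s hs
    · exact (hy j s hs).congr_deriv (by simp [e, gy])
  have hmono : ∀ s ≥ 0,
      0 ≤ ∑ k, Sum.elim (gx s) (-gy s) k * (e (x s, y s) k - e (p, q) k) := by
    intro s hs
    obtain ⟨hxs, hys⟩ := hbox s hs
    simpa [e, gx, gy] using sum_gradient_mul_sub_le_sum_gradient_mul_sub_of_isSaddlePointOn hsaddle
      hp hq hxs hys (hconv _ hys) (hconc _ hxs) (hdx _ hxs _ hys) (hdy _ hxs _ hys)
  exact e.injective.mem_set_image.1 <| hstay (fun s => e (x s, y s)) _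
    (fun s hs k _ => k.rec (hbox s hs).1 (hbox s hs).2) hderiv hmono (hball h₀) t ht

end Stability

/-- **Stability of the saddle point for weighted GDA dynamics** (the transformed GDA
dynamics of a hidden convex-concave game in the operator output space). -/
theorem weighted_gda_stable
    {n m : ℕ} (L : EuclideanSpace ℝ (Fin n) × EuclideanSpace ℝ (Fin m) → ℝ)
    (hL : ContDiff ℝ 1 L)
    (hconv : ∀ y, ConvexOn ℝ Set.univ fun x => L (x, y))
    (hconc : ∀ x, ConcaveOn ℝ Set.univ fun y => L (x, y))
    (p : EuclideanSpace ℝ (Fin n)) (q : EuclideanSpace ℝ (Fin m))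
    (hsaddle : ∀ x y, L (p, y) ≤ L (p, q) ∧ L (p, q) ≤ L (x, q))
    (w : Fin n → ℝ → ℝ) (v : Fin m → ℝ → ℝ)
    (a b : Fin n → ℝ) (c d : Fin m → ℝ)
    (hpI : ∀ i, p i ∈ Set.Ioo (a i) (b i)) (hqJ : ∀ j, q j ∈ Set.Ioo (c j) (d j))
    (hw : ∀ i, ContinuousOn (w i) (Set.Ioo (a i) (b i)))
    (hwpos : ∀ i, ∀ z ∈ Set.Ioo (a i) (b i), 0 < w i z)
    (hv : ∀ j, ContinuousOn (v j) (Set.Ioo (c j) (d j)))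
    (hvpos : ∀ j, ∀ z ∈ Set.Ioo (c j) (d j), 0 < v j z) :
    ∀ ε > 0, ∃ δ > 0,
      ∀ (x : ℝ → EuclideanSpace ℝ (Fin n)) (y : ℝ → EuclideanSpace ℝ (Fin m)),
        (∀ t : ℝ, 0 ≤ t →
          (∀ i, x t i ∈ Set.Ioo (a i) (b i)) ∧ (∀ j, y t j ∈ Set.Ioo (c j) (d j))) →
        (∀ i, ∀ t : ℝ, 0 ≤ t → HasDerivAt (fun s => x s i)
          (-(w i (x t i) * gradient (fun x' => L (x', y t)) (x t) i)) t) →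
        (∀ j, ∀ t : ℝ, 0 ≤ t → HasDerivAt (fun s => y s j)
          (v j (y t j) * gradient (fun y' => L (x t, y')) (y t) j) t) →
        dist (x 0, y 0) (p, q) < δ →
        ∀ t : ℝ, 0 ≤ t → dist (x t, y t) (p, q) < ε := by
  have hdiff : Differentiable ℝ L := hL.differentiable one_ne_zero
  intro ε hε
  obtain ⟨δ, hδ, h⟩ := weighted_gda_stable_general (L := fun x y => L (x, y))
    (I := fun i => Ioo (a i) (b i)) (J := fun j => Ioo (c j) (d j))
    (fun _ _ _ _ => by fun_prop) (fun _ _ _ _ => by fun_prop)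
    (fun y _ => (hconv y).subset (subset_univ _) (convex_coordBox fun _ => convex_Ioo _ _))
    (fun x _ => (hconc x).subset (subset_univ _) (convex_coordBox fun _ => convex_Ioo _ _))
    hpI hqJ (fun x _ y _ => (hsaddle x y).1.trans (hsaddle x y).2)
    (fun i => ⟨isOpen_Ioo, ordConnected_Ioo, hw i, hwpos i⟩)
    (fun j => ⟨isOpen_Ioo, ordConnected_Ioo, hv j, hvpos j⟩) ε hε
  exact ⟨δ, hδ, fun x y hbox hx hy => h x y hbox
    (fun i t ht => (hx i t ht).hasDerivWithinAt) fun j t ht => (hy j t ht).hasDerivWithinAt⟩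
end

section
/- Let L : ℝ^n × ℝ^m → ℝ be C¹ and strictly convex-concave, and suppose its set of saddle points Solution(L) is nonempty. Then Solution(L) is locally asymptotically stable for the continuous gradient descent ascent dynamics ẋ(t) = −∇_x L(x(t),y(t)), ẏ(t) = ∇_y L(x(t),y(t)): there exists an open set R containing Solution(L) such that every C¹ solution (x(t),y(t)) defined for all t ≥ 0 with (x(0),y(0)) ∈ R satisfies dist((x(t),y(t)), Solution(L)) → 0 as t → ∞. -/
/-!
Along gradient descent ascent the squared Euclidean distance to any saddle point `c` is
nonincreasing, because the first-order inequalities for the convex and the concave variable bound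
its derivative at `w` by `2 * (L (c.1, w.2) - L (w.1, c.2)) ≤ 0`. Trajectories are therefore
bounded, and Barbalat's lemma makes this derivative vanish at every cluster point `w`, so that
`L (c.1, w.2) = L c = L (w.1, c.2)`. If `c.1` is the only minimizer of `L (·, c.2)`, this forces
`w.1 = c.1`; hence the first coordinate converges, and a second use of Barbalat's lemma shows that
the partial gradient in the first variable vanishes at `w`, which makes `w` a saddle point. The
case of a unique maximizer is symmetric. As the distance to each cluster point is itself monotone,
there is only one cluster point, and the trajectory converges to it.
-/

open Filter Set Topology
open scoped Gradient RealInnerProductSpace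

section LimitPoints

variable {E G : Type*} [NormedAddCommGroup E] [NormedSpace ℝ E]
  [NormedAddCommGroup G] [NormedSpace ℝ G] {a : ℝ}

theorem exists_tendsto_atTop_of_antitoneOn_Ici {f : ℝ → ℝ} (hf : AntitoneOn f (Ici a))
    (hbdd : BddBelow (f '' Ici a)) : ∃ l, Tendsto f atTop (𝓝 l) := by
  rw [image_eq_range] at hbdd
  exact ⟨_, tendsto_comp_val_Ici_atTop.1
    (tendsto_atTop_ciInf (antitoneOn_iff_antitone.1 hf) hbdd)⟩

theorem norm_sub_sub_smul_le_of_norm_deriv_sub_le {f f' : ℝ → G} {s t C : ℝ} (hst : s ≤ t)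
    (hf : ∀ r ∈ Icc s t, HasDerivWithinAt f (f' r) (Icc s t) r)
    (hC : ∀ r ∈ Icc s t, ‖f' r - f' s‖ ≤ C) :
    ‖f t - f s - (t - s) • f' s‖ ≤ C * (t - s) := by
  have hd : ∀ r ∈ Icc s t,
      HasDerivWithinAt (fun u => f u - u • f' s) (f' r - f' s) (Icc s t) r := fun r hr => by
    simpa only [id_eq, one_smul] using
      (hf r hr).fun_sub ((hasDerivWithinAt_id r _).smul_const (f' s))
  have h := (convex_Icc s t).norm_image_sub_le_of_norm_hasDerivWithin_le hd hC
    (left_mem_Icc.2 hst) (right_mem_Icc.2 hst)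
  rw [Real.norm_of_nonneg (sub_nonneg.2 hst)] at h
  convert h using 2
  module

/-- **Barbalat's lemma** -/
theorem tendsto_deriv_zero_of_uniformContinuousOn {f f' : ℝ → G} {l : G}
    (hf : ∀ t ∈ Ici a, HasDerivWithinAt f (f' t) (Ici a) t) (hl : Tendsto f atTop (𝓝 l))
    (hf' : UniformContinuousOn f' (Ici a)) : Tendsto f' atTop (𝓝 0) := by
  refine NormedAddGroup.tendsto_nhds_zero.2 fun ε hε => ?_
  obtain ⟨δ, hδ, hclose⟩ := Metric.uniformContinuousOn_iff_le.1 hf' (ε / 2) (half_pos hε)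
  have hincr : Tendsto (fun t => f (t + δ) - f t) atTop (𝓝 0) := by
    simpa using (hl.comp (tendsto_atTop_add_const_right _ δ tendsto_id)).sub hl
  filter_upwards [eventually_ge_atTop a,
    NormedAddGroup.tendsto_nhds_zero.1 hincr (ε / 2 * δ) (by positivity)] with t hat hsmall
  have hsub : Icc t (t + δ) ⊆ Ici a := fun r hr => hat.trans hr.1
  have hlin : ‖f (t + δ) - f t - δ • f' t‖ ≤ ε / 2 * δ := by
    simpa using norm_sub_sub_smul_le_of_norm_deriv_sub_le (le_add_of_nonneg_right hδ.le)
      (fun r hr => (hf r (hsub hr)).mono hsub) fun r hr => by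
        rw [← dist_eq_norm]
        refine hclose r (hsub hr) t hat ?_
        rw [Real.dist_eq, abs_of_nonneg (sub_nonneg.2 hr.1)]
        linarith [hr.2]
  have hmul : δ * ‖f' t‖ < δ * ε := calc
    δ * ‖f' t‖ = ‖δ • f' t‖ := by rw [norm_smul, Real.norm_of_nonneg hδ.le]
    _ ≤ ‖f (t + δ) - f t‖ + ‖f (t + δ) - f t - δ • f' t‖ := norm_le_norm_add_norm_sub _ _
    _ < ε / 2 * δ + ε / 2 * δ := add_lt_add_of_lt_of_le hsmall hlin
    _ = δ * ε := by ring
  exact lt_of_mul_lt_mul_left hmul hδ.le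

theorem eq_of_mapClusterPt_of_tendsto_comp {ι X Y : Type*} [TopologicalSpace X]
    [TopologicalSpace Y] [T2Space Y] {l : Filter ι} {u : ι → X} {ψ : X → Y} {w : X} {c : Y}
    (hw : MapClusterPt w l u) (hψ : ContinuousAt ψ w) (hc : Tendsto (ψ ∘ u) l (𝓝 c)) :
    ψ w = c :=
  eq_of_nhds_neBot (ClusterPt.mono (hw.continuousAt_comp hψ) hc)

theorem tendsto_comp_of_forall_mapClusterPt {ι X Y : Type*} [TopologicalSpace X]
    [TopologicalSpace Y] {l : Filter ι} {u : ι → X} {ψ : X → Y} {K : Set X} {c : Y}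
    (hK : IsCompact K) (hu : ∀ᶠ i in l, u i ∈ K) (hψ : Continuous ψ)
    (hc : ∀ w, MapClusterPt w l u → ψ w = c) : Tendsto (ψ ∘ u) l (𝓝 c) := by
  refine (tendsto_iff_ultrafilter _ _ _).2 fun U hU => ?_
  obtain ⟨w, -, hw⟩ := hK.ultrafilter_le_nhds (U.map u) (le_principal_iff.2 (hU hu))
  rw [← hc w (mapClusterPt_iff_ultrafilter.2 ⟨U, hU, hw⟩)]
  exact (hψ.tendsto w).comp hw

variable {v : E → E} {z : ℝ → E} {K : Set E} {w : E}

theorem uniformContinuousOn_of_isIntegralCurveOn {s : Set ℝ} (hs : Convex ℝ s) (hK : IsCompact K)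
    (hv : ContinuousOn v K) (hz : IsIntegralCurveOn z (fun _ => v) s) (hzK : MapsTo z s K) :
    UniformContinuousOn z s := by
  obtain ⟨C, hC⟩ := hK.exists_bound_of_continuousOn hv
  refine (hs.lipschitzOnWith_of_nnnorm_hasDerivWithin_le (C := C.toNNReal) hz
    fun t ht => ?_).uniformContinuousOn
  exact NNReal.coe_le_coe.1 ((hC _ (hzK ht)).trans (Real.le_coe_toNNReal C))

theorem eq_zero_of_mapClusterPt_of_hasDerivWithinAt {f : ℝ → G} {ψ : E → G} {l : G}
    (hK : IsCompact K) (hv : ContinuousOn v K) (hz : IsIntegralCurveOn z (fun _ => v) (Ici a))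
    (hzK : MapsTo z (Ici a) K) (hψ : Continuous ψ)
    (hf : ∀ t ∈ Ici a, HasDerivWithinAt f (ψ (z t)) (Ici a) t) (hl : Tendsto f atTop (𝓝 l))
    (hw : MapClusterPt w atTop z) : ψ w = 0 :=
  eq_of_mapClusterPt_of_tendsto_comp hw hψ.continuousAt <|
    tendsto_deriv_zero_of_uniformContinuousOn hf hl <|
      (hK.uniformContinuousOn_of_continuous hψ.continuousOn).comp
        (uniformContinuousOn_of_isIntegralCurveOn (convex_Ici a) hK hv hz hzK) hzK

theorem clm_field_eq_zero_of_mapClusterPt (φ : E →L[ℝ] G) {b : G} (hK : IsCompact K)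
    (hv : Continuous v) (hz : IsIntegralCurveOn z (fun _ => v) (Ici a))
    (hzK : MapsTo z (Ici a) K) (hφ : ∀ w, MapClusterPt w atTop z → φ w = b)
    (hw : MapClusterPt w atTop z) : φ (v w) = 0 :=
  eq_zero_of_mapClusterPt_of_hasDerivWithinAt (ψ := φ ∘ v) hK hv.continuousOn hz hzK
    (φ.continuous.comp hv) (fun t ht => φ.hasFDerivAt.comp_hasDerivWithinAt t (hz t ht))
    (tendsto_comp_of_forall_mapClusterPt hK ((eventually_ge_atTop a).mono hzK) φ.continuous hφ) hw

end LimitPoints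

section FirstOrder

variable {E : Type*} [NormedAddCommGroup E]

theorem add_fderiv_le_of_convexOn [NormedSpace ℝ E] {f : E → ℝ} {f' : E →L[ℝ] ℝ} {s : Set E}
    {x y : E} (hc : ConvexOn ℝ s f) (hf : HasFDerivWithinAt f f' s x) (hx : x ∈ s) (hy : y ∈ s) :
    f x + f' (y - x) ≤ f y := by
  have hline : HasDerivWithinAt (f ∘ AffineMap.lineMap x y) (f' (y - x))
      (AffineMap.lineMap x y ⁻¹' s) (0 : ℝ) :=
    HasFDerivWithinAt.comp_hasDerivWithinAt (0 : ℝ) (by rwa [AffineMap.lineMap_apply_zero])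
      AffineMap.hasDerivWithinAt_lineMap (mapsTo_preimage _ _)
  have hslope := (hc.comp_affineMap (AffineMap.lineMap x y)).le_slope_of_hasDerivWithinAt
    (by simpa using hx) (by simpa using hy) one_pos hline
  simp only [slope_def_field, Function.comp_apply, AffineMap.lineMap_apply_zero,
    AffineMap.lineMap_apply_one, sub_zero, div_one] at hslope
  linarith

theorem add_inner_gradient_le_of_convexOn [InnerProductSpace ℝ E] [CompleteSpace E] {f : E → ℝ}
    {s : Set E} {x y : E} (hc : ConvexOn ℝ s f) (hf : DifferentiableAt ℝ f x) (hx : x ∈ s)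
    (hy : y ∈ s) : f x + ⟪∇ f x, y - x⟫ ≤ f y := by
  rw [inner_gradient_left]
  exact add_fderiv_le_of_convexOn hc hf.hasFDerivAt.hasFDerivWithinAt hx hy

theorem le_add_inner_gradient_of_concaveOn [InnerProductSpace ℝ E] [CompleteSpace E] {f : E → ℝ}
    {s : Set E} {x y : E} (hc : ConcaveOn ℝ s f) (hf : DifferentiableAt ℝ f x) (hx : x ∈ s)
    (hy : y ∈ s) : f y ≤ f x + ⟪∇ f x, y - x⟫ := by
  have h := add_fderiv_le_of_convexOn hc.neg hf.hasFDerivAt.hasFDerivWithinAt.neg hx hy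
  simp only [Pi.neg_apply, neg_apply] at h
  rw [inner_gradient_left]
  linarith

end FirstOrder

/-- The global saddle points of `L`, for minimization in the first variable and maximization in
the second; the set called `Solution(L)` in the theory of convex-concave games. -/
def saddlePoints {α β : Type*} (L : α × β → ℝ) : Set (α × β) :=
  {z | ∀ x y, L (z.1, y) ≤ L z ∧ L z ≤ L (x, z.2)}

theorem fst_unique_or_snd_unique_of_strict {E F : Type*} [AddCommGroup E] [Module ℝ E]
    [AddCommGroup F] [Module ℝ F] {L : E × F → ℝ} {c : E × F} (hc : c ∈ saddlePoints L)
    (hstrict : (StrictConvexOn ℝ univ fun x => L (x, c.2)) ∨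
      (StrictConcaveOn ℝ univ fun y => L (c.1, y))) :
    (∀ x, L (x, c.2) = L c → x = c.1) ∨ (∀ y, L (c.1, y) = L c → y = c.2) :=
  hstrict.imp
    (fun h x hx => h.eq_of_isMinOn (fun x' _ => hx.trans_le (hc x' c.2).2)
      (fun x' _ => (hc x' c.2).2) (mem_univ x) (mem_univ c.1))
    (fun h y hy => h.eq_of_isMaxOn (fun y' _ => (hc c.1 y').1.trans_eq hy.symm)
      (fun y' _ => (hc c.1 y').1) (mem_univ y) (mem_univ c.2))

section SquaredDistance

variable {E F : Type*} [NormedAddCommGroup E] [NormedAddCommGroup F]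

/-- The squared Euclidean distance on `E × F`, the Lyapunov function of gradient descent ascent.
It is spelled out because the norm of `E × F` is the maximum norm. -/
def sqDist (c w : E × F) : ℝ :=
  ‖w.1 - c.1‖ ^ 2 + ‖w.2 - c.2‖ ^ 2

theorem sqDist_nonneg (c w : E × F) : 0 ≤ sqDist c w := by
  unfold sqDist
  positivity

theorem dist_le_sqrt_sqDist (c w : E × F) : dist w c ≤ √(sqDist c w) := by
  rw [dist_eq_norm, Prod.norm_def]
  exact max_le (Real.le_sqrt_of_sq_le (le_add_of_nonneg_right (sq_nonneg _)))
    (Real.le_sqrt_of_sq_le (le_add_of_nonneg_left (sq_nonneg _)))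

theorem sqDist_self (c : E × F) : sqDist c c = 0 := by
  simp [sqDist]

theorem eq_of_sqDist_eq_zero {c w : E × F} (h : sqDist c w = 0) : w = c :=
  dist_le_zero.1 ((dist_le_sqrt_sqDist c w).trans (by rw [h, Real.sqrt_zero]))

theorem continuous_sqDist (c : E × F) : Continuous (sqDist c) := by
  unfold sqDist
  fun_prop

end SquaredDistance

section DescentAscent

variable {E F : Type*} [NormedAddCommGroup E] [InnerProductSpace ℝ E]
  [NormedAddCommGroup F] [InnerProductSpace ℝ F] {L : E × F → ℝ} {c w : E × F}

section Complete

variable [CompleteSpace E] [CompleteSpace F]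

/-- The vector field `(-∇ₓ L, ∇_y L)` whose integral curves are the trajectories of continuous
gradient descent ascent. -/
noncomputable def descentAscentField (L : E × F → ℝ) (z : E × F) : E × F :=
  (-∇ (fun x => L (x, z.2)) z.1, ∇ (fun y => L (z.1, y)) z.2)

theorem continuous_descentAscentField (hL : ContDiff ℝ 1 L) :
    Continuous (descentAscentField L) := by
  have hd : ∀ z, HasFDerivAt L (fderiv ℝ L z) z :=
    fun z => (hL.differentiable one_ne_zero z).hasFDerivAt
  have hfst : ∀ z : E × F, fderiv ℝ (fun x => L (x, z.2)) z.1 =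
      (fderiv ℝ L z).comp (ContinuousLinearMap.inl ℝ E F) := fun z =>
    (HasFDerivAt.comp z.1 (hd z) (hasFDerivAt_prodMk_left z.1 z.2)).fderiv
  have hsnd : ∀ z : E × F, fderiv ℝ (fun y => L (z.1, y)) z.2 =
      (fderiv ℝ L z).comp (ContinuousLinearMap.inr ℝ E F) := fun z =>
    (HasFDerivAt.comp z.2 (hd z) (hasFDerivAt_prodMk_right z.1 z.2)).fderiv
  have := hL.continuous_fderiv one_ne_zero
  unfold descentAscentField gradient
  simp only [hfst, hsnd]
  fun_prop

/-- The derivative of `sqDist c` at `w` in the direction of `descentAscentField L w`. -/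
noncomputable def sqDistRate (L : E × F → ℝ) (c w : E × F) : ℝ :=
  2 * ⟪w.1 - c.1, (descentAscentField L w).1⟫ + 2 * ⟪w.2 - c.2, (descentAscentField L w).2⟫

theorem continuous_sqDistRate (hL : ContDiff ℝ 1 L) (c : E × F) :
    Continuous (sqDistRate L c) :=
  have hv := continuous_descentAscentField hL
  (((continuous_fst.sub continuous_const).inner hv.fst).const_mul 2).add
    (((continuous_snd.sub continuous_const).inner hv.snd).const_mul 2)

theorem hasDerivWithinAt_sqDist {z : ℝ → E × F} {s : Set ℝ} {t : ℝ}
    (hz : HasDerivWithinAt z (descentAscentField L (z t)) s t) (c : E × F) :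
    HasDerivWithinAt (fun τ => sqDist c (z τ)) (sqDistRate L c (z t)) s t :=
  have hfst := (ContinuousLinearMap.fst ℝ E F).hasFDerivAt.comp_hasDerivWithinAt t hz
  have hsnd := (ContinuousLinearMap.snd ℝ E F).hasFDerivAt.comp_hasDerivWithinAt t hz
  (hfst.sub_const c.1).norm_sq.add (hsnd.sub_const c.2).norm_sq

theorem sqDistRate_le (hL : Differentiable ℝ L)
    (hconv : ∀ y, ConvexOn ℝ univ fun x => L (x, y))
    (hconc : ∀ x, ConcaveOn ℝ univ fun y => L (x, y)) (c w : E × F) :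
    sqDistRate L c w ≤ 2 * (L (c.1, w.2) - L (w.1, c.2)) := by
  have hfst := add_inner_gradient_le_of_convexOn (hconv w.2)
    (by fun_prop : DifferentiableAt ℝ (fun x => L (x, w.2)) w.1) (mem_univ _) (mem_univ c.1)
  have hsnd := le_add_inner_gradient_of_concaveOn (hconc w.1)
    (by fun_prop : DifferentiableAt ℝ (fun y => L (w.1, y)) w.2) (mem_univ _) (mem_univ c.2)
  rw [real_inner_comm, ← neg_sub, inner_neg_left] at hfst hsnd
  simp only [sqDistRate, descentAscentField, inner_neg_right]
  linarith

theorem sqDistRate_nonpos (hL : Differentiable ℝ L)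
    (hconv : ∀ y, ConvexOn ℝ univ fun x => L (x, y))
    (hconc : ∀ x, ConcaveOn ℝ univ fun y => L (x, y)) (hc : c ∈ saddlePoints L) (w : E × F) :
    sqDistRate L c w ≤ 0 := by
  linarith [sqDistRate_le hL hconv hconc c w, (hc w.1 w.2).1, (hc w.1 w.2).2]

theorem apply_eq_of_sqDistRate_eq_zero (hL : Differentiable ℝ L)
    (hconv : ∀ y, ConvexOn ℝ univ fun x => L (x, y))
    (hconc : ∀ x, ConcaveOn ℝ univ fun y => L (x, y)) (hc : c ∈ saddlePoints L)
    (hw : sqDistRate L c w = 0) : L (c.1, w.2) = L c ∧ L (w.1, c.2) = L c := by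
  have hle := sqDistRate_le hL hconv hconc c w
  obtain ⟨hmax, hmin⟩ := hc w.1 w.2
  constructor <;> linarith

theorem mem_saddlePoints_of_fst_eq (hL : Differentiable ℝ L)
    (hconv : ∀ y, ConvexOn ℝ univ fun x => L (x, y)) (hc : c ∈ saddlePoints L)
    (hfst : w.1 = c.1) (hval : L (c.1, w.2) = L c) (hgrad : (descentAscentField L w).1 = 0) :
    w ∈ saddlePoints L := by
  have hw : L w = L c := by rw [← hval, ← hfst]
  refine fun x y => ⟨?_, ?_⟩
  · rw [hw, hfst]
    exact (hc x y).1
  · have h := add_inner_gradient_le_of_convexOn (hconv w.2)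
      (by fun_prop : DifferentiableAt ℝ (fun x => L (x, w.2)) w.1) (mem_univ _) (mem_univ x)
    rwa [neg_eq_zero.1 hgrad, inner_zero_left, add_zero] at h

theorem mem_saddlePoints_of_snd_eq (hL : Differentiable ℝ L)
    (hconc : ∀ x, ConcaveOn ℝ univ fun y => L (x, y)) (hc : c ∈ saddlePoints L)
    (hsnd : w.2 = c.2) (hval : L (w.1, c.2) = L c) (hgrad : (descentAscentField L w).2 = 0) :
    w ∈ saddlePoints L := by
  have hw : L w = L c := by rw [← hval, ← hsnd]
  refine fun x y => ⟨?_, ?_⟩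
  · have h := le_add_inner_gradient_of_concaveOn (hconc w.1)
      (by fun_prop : DifferentiableAt ℝ (fun y => L (w.1, y)) w.2) (mem_univ _) (mem_univ y)
    rwa [show ∇ (fun y => L (w.1, y)) w.2 = 0 from hgrad, inner_zero_left, add_zero] at h
  · rw [hw, hsnd]
    exact (hc x y).2

end Complete

section Trajectories

variable {z : ℝ → E × F} {a : ℝ}

theorem antitoneOn_sqDist [CompleteSpace E] [CompleteSpace F] (hL : Differentiable ℝ L)
    (hconv : ∀ y, ConvexOn ℝ univ fun x => L (x, y))
    (hconc : ∀ x, ConcaveOn ℝ univ fun y => L (x, y)) (hc : c ∈ saddlePoints L)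
    (hz : IsIntegralCurveOn z (fun _ => descentAscentField L) (Ici a)) :
    AntitoneOn (fun t => sqDist c (z t)) (Ici a) :=
  have hderiv : ∀ t ∈ Ici a, HasDerivWithinAt (fun τ => sqDist c (z τ))
      (sqDistRate L c (z t)) (Ici a) t := fun t ht => hasDerivWithinAt_sqDist (hz t ht) c
  antitoneOn_of_hasDerivWithinAt_nonpos (convex_Ici a) (HasDerivWithinAt.continuousOn hderiv)
    (fun t ht => (hderiv t (interior_subset ht)).mono interior_subset)
    fun t _ => sqDistRate_nonpos hL hconv hconc hc (z t)

theorem exists_tendsto_sqDist [CompleteSpace E] [CompleteSpace F] (hL : Differentiable ℝ L)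
    (hconv : ∀ y, ConvexOn ℝ univ fun x => L (x, y))
    (hconc : ∀ x, ConcaveOn ℝ univ fun y => L (x, y)) (hc : c ∈ saddlePoints L)
    (hz : IsIntegralCurveOn z (fun _ => descentAscentField L) (Ici a)) :
    ∃ l, Tendsto (fun t => sqDist c (z t)) atTop (𝓝 l) :=
  exists_tendsto_atTop_of_antitoneOn_Ici (antitoneOn_sqDist hL hconv hconc hc hz)
    ⟨0, forall_mem_image.2 fun _ _ => sqDist_nonneg c _⟩

variable [ProperSpace E] [ProperSpace F]

theorem exists_isCompact_mapsTo_of_isIntegralCurveOn (hL : Differentiable ℝ L)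
    (hconv : ∀ y, ConvexOn ℝ univ fun x => L (x, y))
    (hconc : ∀ x, ConcaveOn ℝ univ fun y => L (x, y)) (hc : c ∈ saddlePoints L)
    (hz : IsIntegralCurveOn z (fun _ => descentAscentField L) (Ici a)) :
    ∃ K, IsCompact K ∧ MapsTo z (Ici a) K :=
  ⟨Metric.closedBall c √(sqDist c (z a)), isCompact_closedBall _ _, fun _ ht =>
    (dist_le_sqrt_sqDist c _).trans
      (Real.sqrt_le_sqrt (antitoneOn_sqDist hL hconv hconc hc hz self_mem_Ici ht ht))⟩

theorem mem_saddlePoints_of_mapClusterPt (hL : ContDiff ℝ 1 L)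
    (hconv : ∀ y, ConvexOn ℝ univ fun x => L (x, y))
    (hconc : ∀ x, ConcaveOn ℝ univ fun y => L (x, y)) (hc : c ∈ saddlePoints L)
    (hunique : (∀ x, L (x, c.2) = L c → x = c.1) ∨ (∀ y, L (c.1, y) = L c → y = c.2))
    (hz : IsIntegralCurveOn z (fun _ => descentAscentField L) (Ici a))
    (hw : MapClusterPt w atTop z) : w ∈ saddlePoints L := by
  have hd := hL.differentiable one_ne_zero
  have hv := continuous_descentAscentField hL
  obtain ⟨K, hK, hzK⟩ := exists_isCompact_mapsTo_of_isIntegralCurveOn hd hconv hconc hc hz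
  obtain ⟨l, hl⟩ := exists_tendsto_sqDist hd hconv hconc hc hz
  have hval : ∀ w, MapClusterPt w atTop z → L (c.1, w.2) = L c ∧ L (w.1, c.2) = L c :=
    fun w hw => apply_eq_of_sqDistRate_eq_zero hd hconv hconc hc <|
      eq_zero_of_mapClusterPt_of_hasDerivWithinAt hK hv.continuousOn hz hzK
        (continuous_sqDistRate hL c) (fun t ht => hasDerivWithinAt_sqDist (hz t ht) c) hl hw
  rcases hunique with hmin | hmax
  · have hfst : ∀ w, MapClusterPt w atTop z → w.1 = c.1 := fun w hw => hmin _ (hval w hw).2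
    exact mem_saddlePoints_of_fst_eq hd hconv hc (hfst w hw) (hval w hw).1
      (clm_field_eq_zero_of_mapClusterPt (.fst ℝ E F) hK hv hz hzK hfst hw)
  · have hsnd : ∀ w, MapClusterPt w atTop z → w.2 = c.2 := fun w hw => hmax _ (hval w hw).1
    exact mem_saddlePoints_of_snd_eq hd hconc hc (hsnd w hw) (hval w hw).2
      (clm_field_eq_zero_of_mapClusterPt (.snd ℝ E F) hK hv hz hzK hsnd hw)

theorem strict_convex_concave_locally_asymptotically_stable_general (hL : ContDiff ℝ 1 L)
    (hconv : ∀ y, ConvexOn ℝ univ fun x => L (x, y))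
    (hconc : ∀ x, ConcaveOn ℝ univ fun y => L (x, y)) (hc : c ∈ saddlePoints L)
    (hunique : (∀ x, L (x, c.2) = L c → x = c.1) ∨ (∀ y, L (c.1, y) = L c → y = c.2))
    (hz : IsIntegralCurveOn z (fun _ => descentAscentField L) (Ici a)) :
    ∃ w ∈ saddlePoints L, Tendsto z atTop (𝓝 w) := by
  have hd := hL.differentiable one_ne_zero
  have hsaddle : ∀ w, MapClusterPt w atTop z → w ∈ saddlePoints L :=
    fun w => mem_saddlePoints_of_mapClusterPt hL hconv hconc hc hunique hz
  obtain ⟨K, hK, hzK⟩ := exists_isCompact_mapsTo_of_isIntegralCurveOn hd hconv hconc hc hz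
  have hevK : ∀ᶠ t in atTop, z t ∈ K := (eventually_ge_atTop a).mono hzK
  obtain ⟨w, -, hw⟩ := hK.exists_mapClusterPt (tendsto_principal.2 hevK)
  refine ⟨w, hsaddle w hw, hK.tendsto_nhds_of_unique_mapClusterPt hevK fun w' _ hw' => ?_⟩
  obtain ⟨l, hl⟩ := exists_tendsto_sqDist hd hconv hconc (hsaddle w hw) hz
  have hlim : ∀ u, MapClusterPt u atTop z → sqDist w u = l := fun u hu =>
    eq_of_mapClusterPt_of_tendsto_comp hu (continuous_sqDist w).continuousAt hl
  exact eq_of_sqDist_eq_zero (by rw [hlim w' hw', ← hlim w hw, sqDist_self])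

end Trajectories

end DescentAscent

/-- **Local asymptotic stability of the solution set in strictly convex-concave games:**
there is an open set `R` containing the set of saddle points of `L` such that every GDA
trajectory starting in `R` approaches the set of saddle points. -/
theorem strict_convex_concave_locally_asymptotically_stable
    {n m : ℕ} (L : EuclideanSpace ℝ (Fin n) × EuclideanSpace ℝ (Fin m) → ℝ)
    (hL : ContDiff ℝ 1 L)
    (hconv : ∀ y, ConvexOn ℝ Set.univ fun x => L (x, y))
    (hconc : ∀ x, ConcaveOn ℝ Set.univ fun y => L (x, y))
    (hstrict : ∀ x y, (StrictConvexOn ℝ Set.univ fun x' => L (x', y)) ∨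
      (StrictConcaveOn ℝ Set.univ fun y' => L (x, y')))
    (hsol : ∃ p q, ∀ x y, L (p, y) ≤ L (p, q) ∧ L (p, q) ≤ L (x, q)) :
    ∃ R : Set (EuclideanSpace ℝ (Fin n) × EuclideanSpace ℝ (Fin m)),
      IsOpen R ∧
      {z : EuclideanSpace ℝ (Fin n) × EuclideanSpace ℝ (Fin m) |
        ∀ x y, L (z.1, y) ≤ L (z.1, z.2) ∧ L (z.1, z.2) ≤ L (x, z.2)} ⊆ R ∧
      ∀ (x : ℝ → EuclideanSpace ℝ (Fin n)) (y : ℝ → EuclideanSpace ℝ (Fin m)),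
        (∀ t : ℝ, 0 ≤ t →
          HasDerivAt x (-gradient (fun x' => L (x', y t)) (x t)) t) →
        (∀ t : ℝ, 0 ≤ t →
          HasDerivAt y (gradient (fun y' => L (x t, y')) (y t)) t) →
        (x 0, y 0) ∈ R →
        Filter.Tendsto (fun t => Metric.infDist (x t, y t)
          {z : EuclideanSpace ℝ (Fin n) × EuclideanSpace ℝ (Fin m) |
            ∀ x' y', L (z.1, y') ≤ L (z.1, z.2) ∧ L (z.1, z.2) ≤ L (x', z.2)})
          Filter.atTop (nhds 0) := by
  obtain ⟨p, q, (hpq : (p, q) ∈ saddlePoints L)⟩ := hsol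
  refine ⟨univ, isOpen_univ, subset_univ _, fun x y hx hy _ => ?_⟩
  have hz : IsIntegralCurveOn (fun t => (x t, y t)) (fun _ => descentAscentField L) (Ici 0) :=
    fun t ht => ((hx t ht).prodMk (hy t ht)).hasDerivWithinAt
  obtain ⟨w, hw, hlim⟩ := strict_convex_concave_locally_asymptotically_stable_general
    hL hconv hconc hpq (fst_unique_or_snd_unique_of_strict hpq (hstrict p q)) hz
  have hdist := ((Metric.continuous_infDist_pt (saddlePoints L)).tendsto w).comp hlim
  rwa [Metric.infDist_zero_of_mem hw] at hdist
end

section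
/- Let f : ℝ^N → ℝ and g : ℝ^M → ℝ be C² functions and let p, q ∈ ℝ. Consider the modified Hamiltonian gradient descent dynamics θ̇(t) = −∇f(θ(t))·‖∇g(φ(t))‖²·(f(θ(t)) − p), φ̇(t) = −∇g(φ(t))·‖∇f(θ(t))‖²·(g(φ(t)) − q) for the hidden bilinear objective L(θ,φ) = (f(θ) − p)(g(φ) − q). Let (θ(t),φ(t)) be a C¹ solution defined for all t ≥ 0 whose initialization is safe for (p,q): ∇f(θ(0)) ≠ 0, ∇g(φ(0)) ≠ 0, p lies in the image of t ↦ f(γ(t)) where γ solves γ̇ = ∇f(γ), γ(0) = θ(0), and q lies in the image of g along the gradient ascent flow of g started at φ(0). Then (f(θ(t)), g(φ(t))) → (p,q) as t → ∞. -/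
/-!
Each player's trajectory moves along the gradient ascent curve `γ` through its starting point, at
a variable signed speed: `θ = γ ∘ s` by uniqueness of ODE solutions. The residual `f ∘ θ - p` solves
a scalar linear equation with nonnegative decay rate, so it shrinks without changing sign. As
`f ∘ γ` is strictly increasing and attains `p`, safety confines `s` to a compact interval, on which
`‖∇f ∘ γ‖` is bounded away from zero. The same bound for the opponent makes the decay rate of each
residual at least a positive constant, hence the convergence.
-/

open Set Filter Topology
open scoped Gradient RealInnerProductSpace

section TimeChange

variable {E : Type*} [NormedAddCommGroup E] [NormedSpace ℝ E]
  {v : E → E} {c : ℝ → ℝ} {x y γ : ℝ → E}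

theorem exists_lipschitzOnWith_smul {ι X : Type*} [TopologicalSpace ι] [PseudoMetricSpace X]
    {c : ι → ℝ} {v : X → E} {I : Set ι} {Z : Set X}
    (hI : IsCompact I) (hZ : IsCompact Z) (hc : ContinuousOn c I) (hv : LocallyLipschitzOn Z v) :
    ∃ K, ∀ t ∈ I, LipschitzOnWith K (fun z ↦ c t • v z) Z := by
  obtain ⟨K, hK⟩ := hv.exists_lipschitzOnWith_of_compact hZ
  obtain ⟨C, hC⟩ := hI.exists_bound_of_continuousOn hc
  refine ⟨C.toNNReal * K, fun t ht ↦ LipschitzOnWith.of_dist_le_mul fun z hz w hw ↦ ?_⟩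
  rw [dist_smul₀, NNReal.coe_mul, mul_assoc]
  gcongr
  · exact (hC t ht).trans (Real.le_coe_toNNReal C)
  · exact hK.dist_le_mul z hz w hw

theorem eqOn_Icc_of_isIntegralCurveOn_smul {a b t₀ : ℝ} (hv : LocallyLipschitz v)
    (hc : ContinuousOn c (Icc a b))
    (hx : IsIntegralCurveOn x (fun t z ↦ c t • v z) (Icc a b))
    (hy : IsIntegralCurveOn y (fun t z ↦ c t • v z) (Icc a b))
    (ht₀ : t₀ ∈ Icc a b) (hxy : x t₀ = y t₀) : EqOn x y (Icc a b) := by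
  set Z : Set E := x '' Icc a b ∪ y '' Icc a b
  have hZ : IsCompact Z :=
    (isCompact_Icc.image_of_continuousOn hx.continuousOn).union
      (isCompact_Icc.image_of_continuousOn hy.continuousOn)
  obtain ⟨K, hK⟩ := exists_lipschitzOnWith_smul isCompact_Icc hZ hc hv.locallyLipschitzOn
  have hxZ : ∀ t ∈ Icc a b, x t ∈ Z := fun t ht ↦ Or.inl (mem_image_of_mem x ht)
  have hyZ : ∀ t ∈ Icc a b, y t ∈ Z := fun t ht ↦ Or.inr (mem_image_of_mem y ht)
  have hl : Icc a t₀ ⊆ Icc a b := Icc_subset_Icc_right ht₀.2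
  have hr : Icc t₀ b ⊆ Icc a b := Icc_subset_Icc_left ht₀.1
  have hl' : Ioc a t₀ ⊆ Icc a b := Ioc_subset_Icc_self.trans hl
  have hr' : Ico t₀ b ⊆ Icc a b := Ico_subset_Icc_self.trans hr
  rw [← Icc_union_Icc_eq_Icc ht₀.1 ht₀.2]
  refine EqOn.union ?_ ?_
  · exact ODE_solution_unique_of_mem_Icc_left (fun t ht ↦ hK t (hl' ht))
      (hx.continuousOn.mono hl)
      (fun t ht ↦ (hx.mono hl t (Ioc_subset_Icc_self ht)).mono_of_mem_nhdsWithin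
        (Icc_mem_nhdsLE_of_mem ht))
      (fun t ht ↦ hxZ t (hl' ht)) (hy.continuousOn.mono hl)
      (fun t ht ↦ (hy.mono hl t (Ioc_subset_Icc_self ht)).mono_of_mem_nhdsWithin
        (Icc_mem_nhdsLE_of_mem ht))
      (fun t ht ↦ hyZ t (hl' ht)) hxy
  · exact ODE_solution_unique_of_mem_Icc_right (fun t ht ↦ hK t (hr' ht))
      (hx.continuousOn.mono hr)
      (fun t ht ↦ (hx.mono hr t (Ico_subset_Icc_self ht)).mono_of_mem_nhdsWithin
        (Icc_mem_nhdsGE_of_mem ht))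
      (fun t ht ↦ hxZ t (hr' ht)) (hy.continuousOn.mono hr)
      (fun t ht ↦ (hy.mono hr t (Ico_subset_Icc_self ht)).mono_of_mem_nhdsWithin
        (Icc_mem_nhdsGE_of_mem ht))
      (fun t ht ↦ hyZ t (hr' ht)) hxy

theorem eqOn_of_isIntegralCurveOn_smul {S : Set ℝ} [S.OrdConnected] {t₀ : ℝ}
    (hv : LocallyLipschitz v) (hc : ContinuousOn c S)
    (hx : IsIntegralCurveOn x (fun t z ↦ c t • v z) S)
    (hy : IsIntegralCurveOn y (fun t z ↦ c t • v z) S)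
    (ht₀ : t₀ ∈ S) (hxy : x t₀ = y t₀) : EqOn x y S := by
  intro t ht
  have hS : uIcc t₀ t ⊆ S := OrdConnected.uIcc_subset ‹_› ht₀ ht
  exact eqOn_Icc_of_isIntegralCurveOn_smul hv (hc.mono hS) (hx.mono hS) (hy.mono hS)
    left_mem_uIcc hxy right_mem_uIcc

theorem ne_zero_of_isIntegralCurve (hv : LocallyLipschitz v)
    (hγ : IsIntegralCurve γ fun _ ↦ v) {t₀ : ℝ} (h₀ : v (γ t₀) ≠ 0) (t : ℝ) : v (γ t) ≠ 0 := by
  intro h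
  have hflow : IsIntegralCurve γ fun _ z ↦ (1 : ℝ) • v z := by simpa only [one_smul] using hγ
  have hconst : IsIntegralCurve (fun _ ↦ γ t) fun _ z ↦ (1 : ℝ) • v z := fun s ↦ by
    simpa only [h, smul_zero] using hasDerivAt_const s (γ t)
  have hγt : EqOn γ (fun _ ↦ γ t) univ :=
    eqOn_of_isIntegralCurveOn_smul hv continuousOn_const (hflow.isIntegralCurveOn univ)
      (hconst.isIntegralCurveOn univ) (mem_univ t) rfl
  exact h₀ (hγt (mem_univ t₀) ▸ h)

theorem isIntegralCurveOn_comp_of_hasDerivWithinAt {S : Set ℝ} {s : ℝ → ℝ}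
    (hγ : IsIntegralCurve γ fun _ ↦ v) (hs : ∀ t ∈ S, HasDerivWithinAt s (c t) S t) :
    IsIntegralCurveOn (γ ∘ s) (fun t z ↦ c t • v z) S :=
  fun t ht ↦ (hγ (s t)).scomp_hasDerivWithinAt t (hs t ht)

theorem exists_hasDerivWithinAt_Ici {F : Type*} [NormedAddCommGroup F] [NormedSpace ℝ F]
    [CompleteSpace F] {k : ℝ → F} {a : ℝ} (hk : ContinuousOn k (Ici a)) (K₀ : F) :
    ∃ K : ℝ → F, K a = K₀ ∧ ∀ t ∈ Ici a, HasDerivWithinAt K (k t) (Ici a) t := by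
  have hcont : Continuous fun t ↦ k (max a t) :=
    hk.comp_continuous (by fun_prop) fun t ↦ le_max_left a t
  refine ⟨fun t ↦ K₀ + ∫ u in a..t, k (max a u), by simp, fun t ht ↦ ?_⟩
  have h := ((hcont.integral_hasStrictDerivAt a t).hasDerivAt.const_add K₀).hasDerivWithinAt
    (s := Ici a)
  rwa [max_eq_right (mem_Ici.1 ht)] at h

theorem exists_eqOn_comp_of_isIntegralCurveOn_smul {a r : ℝ} (hv : LocallyLipschitz v)
    (hc : ContinuousOn c (Ici a))
    (hx : IsIntegralCurveOn x (fun t z ↦ c t • v z) (Ici a))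
    (hγ : IsIntegralCurve γ fun _ ↦ v) (hxγ : x a = γ r) :
    ∃ s : ℝ → ℝ, s a = r ∧ (∀ t ∈ Ici a, HasDerivWithinAt s (c t) (Ici a) t) ∧
      EqOn x (γ ∘ s) (Ici a) := by
  obtain ⟨s, hsa, hs⟩ := exists_hasDerivWithinAt_Ici hc r
  refine ⟨s, hsa, hs, ?_⟩
  exact eqOn_of_isIntegralCurveOn_smul hv hc hx
    (isIntegralCurveOn_comp_of_hasDerivWithinAt hγ hs) self_mem_Ici (by simp [hxγ, hsa])

end TimeChange

section LinearDecay

variable {e k : ℝ → ℝ} {a m : ℝ}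

-- The equation `e' = -k e` is a time change of `e' = e`, whose solutions are multiples of `exp`.
theorem exists_eq_mul_exp_of_hasDerivWithinAt_neg_mul (hk : ContinuousOn k (Ici a))
    (he : ∀ t ∈ Ici a, HasDerivWithinAt e (-k t * e t) (Ici a) t) (hm : ∀ t ∈ Ici a, m ≤ k t) :
    ∃ s : ℝ → ℝ, ∀ t ∈ Ici a, s t ≤ -m * (t - a) ∧ e t = e a * Real.exp (s t) := by
  have hexp : IsIntegralCurve (fun u ↦ e a * Real.exp u) fun _ z ↦ z :=
    fun u ↦ (Real.hasDerivAt_exp u).const_mul (e a)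
  obtain ⟨s, hsa, hs, hes⟩ := exists_eqOn_comp_of_isIntegralCurveOn_smul (r := 0)
    LipschitzWith.id.locallyLipschitz hk.neg he hexp (by simp)
  refine ⟨s, fun t ht ↦ ⟨?_, hes ht⟩⟩
  have hs' : ∀ u ∈ interior (Ici a), HasDerivAt s (-k u) u := fun u hu ↦
    (hs u (interior_subset hu)).hasDerivAt (mem_interior_iff_mem_nhds.1 hu)
  have h := (convex_Ici a).image_sub_le_mul_sub_of_deriv_le (C := -m)
    (fun u hu ↦ (hs u hu).continuousWithinAt)
    (fun u hu ↦ (hs' u hu).differentiableAt.differentiableWithinAt)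
    (fun u hu ↦ (hs' u hu).deriv.trans_le (neg_le_neg (hm u (interior_subset hu))))
    a self_mem_Ici t ht ht
  rwa [hsa, sub_zero] at h

theorem mem_uIcc_zero_of_hasDerivWithinAt_neg_mul (hk : ContinuousOn k (Ici a))
    (he : ∀ t ∈ Ici a, HasDerivWithinAt e (-k t * e t) (Ici a) t) (hk₀ : ∀ t ∈ Ici a, 0 ≤ k t)
    {t : ℝ} (ht : t ∈ Ici a) : e t ∈ uIcc 0 (e a) := by
  obtain ⟨s, hs⟩ := exists_eq_mul_exp_of_hasDerivWithinAt_neg_mul hk he hk₀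
  obtain ⟨hst, het⟩ := hs t ht
  have hexp : Real.exp (s t) ∈ uIcc 0 1 := by
    rw [uIcc_of_le zero_le_one]
    exact ⟨(Real.exp_pos _).le, Real.exp_le_one_iff.2 (by simpa using hst)⟩
  have himage := mem_image_of_mem (e a * ·) hexp
  rwa [image_const_mul_uIcc, mul_zero, mul_one, ← het] at himage

theorem tendsto_zero_of_hasDerivWithinAt_neg_mul (hk : ContinuousOn k (Ici a))
    (he : ∀ t ∈ Ici a, HasDerivWithinAt e (-k t * e t) (Ici a) t) (hm₀ : 0 < m)
    (hm : ∀ t ∈ Ici a, m ≤ k t) : Tendsto e atTop (𝓝 0) := by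
  obtain ⟨s, hs⟩ := exists_eq_mul_exp_of_hasDerivWithinAt_neg_mul hk he hm
  have hlin : Tendsto (fun t ↦ -m * (t - a)) atTop atBot :=
    (tendsto_atTop_add_const_right atTop (-a) tendsto_id).const_mul_atTop_of_neg
      (neg_neg_of_pos hm₀)
  have hbot : Tendsto s atTop atBot := by
    refine tendsto_atBot_mono' atTop ?_ hlin
    filter_upwards [Ici_mem_atTop a] with t ht using (hs t ht).1
  have hlim : Tendsto (fun t ↦ e a * Real.exp (s t)) atTop (𝓝 0) := by
    simpa only [mul_zero, Function.comp_apply] using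
      (Real.tendsto_exp_atBot.comp hbot).const_mul (e a)
  refine hlim.congr' ?_
  filter_upwards [Ici_mem_atTop a] with t ht using (hs t ht).2.symm

end LinearDecay

section Gradient

variable {E : Type*} [NormedAddCommGroup E] [InnerProductSpace ℝ E] [CompleteSpace E]
  {f : E → ℝ} {γ : ℝ → E}

theorem locallyLipschitz_gradient (hf : ContDiff ℝ 2 f) : LocallyLipschitz (∇ f) := by
  have hfderiv : ContDiff ℝ 1 (fderiv ℝ f) := hf.fderiv_right (by norm_num)
  exact (InnerProductSpace.toDual ℝ E).symm.lipschitz.locallyLipschitz.comp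
    hfderiv.locallyLipschitz

theorem hasDerivWithinAt_comp_of_smul_gradient {S : Set ℝ} {t r : ℝ}
    (hf : DifferentiableAt ℝ f (γ t)) (hγ : HasDerivWithinAt γ (r • ∇ f (γ t)) S t) :
    HasDerivWithinAt (f ∘ γ) (r * ‖∇ f (γ t)‖ ^ 2) S t := by
  refine (hf.hasGradientAt.hasFDerivAt.comp_hasDerivWithinAt t hγ).congr_deriv ?_
  rw [InnerProductSpace.toDual_apply_apply, real_inner_smul_right, real_inner_self_eq_norm_sq]

theorem strictMono_comp_of_isIntegralCurve_gradient (hf : Differentiable ℝ f)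
    (hγ : IsIntegralCurve γ fun _ ↦ ∇ f) (hne : ∀ t, ∇ f (γ t) ≠ 0) : StrictMono (f ∘ γ) := by
  refine strictMono_of_hasDerivAt_pos (f' := fun t ↦ ‖∇ f (γ t)‖ ^ 2) (fun t ↦ ?_)
    fun t ↦ pow_pos (norm_pos_iff.2 (hne t)) 2
  have h : HasDerivWithinAt γ ((1 : ℝ) • ∇ f (γ t)) univ t := by
    simpa only [one_smul] using (hγ t).hasDerivWithinAt
  simpa only [one_mul, hasDerivWithinAt_univ] using
    hasDerivWithinAt_comp_of_smul_gradient (hf (γ t)) h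

end Gradient

section ResidualDescent

variable {E : Type*} [NormedAddCommGroup E] [InnerProductSpace ℝ E] [CompleteSpace E]
  {f : E → ℝ} {p : ℝ} {a : ℝ → ℝ} {θ : ℝ → E}

/-- Gradient descent on `(f - p)² / 2` over the times `t ≥ 0`, at the time-dependent rate `a`. Each
player's half of the Hamiltonian dynamics has this form, with the opponent's squared gradient norm
as the rate. The derivative at `t = 0` is one-sided. -/
def IsResidualDescent (f : E → ℝ) (p : ℝ) (a : ℝ → ℝ) (θ : ℝ → E) : Prop :=
  IsIntegralCurveOn θ (fun t z ↦ -((a t * (f z - p)) • ∇ f z)) (Ici 0)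

/-- Safety of the initial point `x₀` for the target value `p`: `x₀` is not critical, and `f` attains
`p` on the gradient ascent curve through `x₀`, at a positive or negative time. -/
def IsSafeInitialization (f : E → ℝ) (x₀ : E) (p : ℝ) : Prop :=
  ∇ f x₀ ≠ 0 ∧ ∃ γ : ℝ → E, γ 0 = x₀ ∧ IsIntegralCurve γ (fun _ ↦ ∇ f) ∧ ∃ t, f (γ t) = p

namespace IsResidualDescent

theorem hasDerivWithinAt (hθ : IsResidualDescent f p a θ) {t : ℝ} (ht : t ∈ Ici 0) :
    HasDerivWithinAt θ (-(a t * (f (θ t) - p)) • ∇ f (θ t)) (Ici 0) t := by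
  simpa only [neg_smul] using hθ t ht

theorem continuousOn_norm_gradient_sq (hθ : IsResidualDescent f p a θ) (hf : Continuous (∇ f)) :
    ContinuousOn (fun t ↦ ‖∇ f (θ t)‖ ^ 2) (Ici 0) :=
  (hf.comp_continuousOn (IsIntegralCurveOn.continuousOn hθ)).norm.pow 2

theorem hasDerivWithinAt_residual (hθ : IsResidualDescent f p a θ) (hf : Differentiable ℝ f)
    {t : ℝ} (ht : t ∈ Ici 0) :
    HasDerivWithinAt (fun t ↦ f (θ t) - p) (-(a t * ‖∇ f (θ t)‖ ^ 2) * (f (θ t) - p)) (Ici 0) t :=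
  ((hasDerivWithinAt_comp_of_smul_gradient (hf (θ t)) (hθ.hasDerivWithinAt ht)).sub_const
    p).congr_deriv (by ring)

theorem value_mem_uIcc (hθ : IsResidualDescent f p a θ) (hf : Differentiable ℝ f)
    (hf' : Continuous (∇ f)) (ha : ContinuousOn a (Ici 0)) (ha₀ : ∀ t ∈ Ici 0, 0 ≤ a t)
    {t : ℝ} (ht : t ∈ Ici 0) : f (θ t) ∈ uIcc (f (θ 0)) p := by
  have h : f (θ t) - p ∈ uIcc (p - p) (f (θ 0) - p) := by
    rw [sub_self]
    exact mem_uIcc_zero_of_hasDerivWithinAt_neg_mul (ha.mul (hθ.continuousOn_norm_gradient_sq hf'))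
      (fun t ht ↦ hθ.hasDerivWithinAt_residual hf ht)
      (fun t ht ↦ mul_nonneg (ha₀ t ht) (sq_nonneg _)) ht
  rw [← image_sub_const_uIcc, uIcc_comm] at h
  exact sub_left_injective.mem_set_image.1 h

theorem exists_eqOn_comp (hθ : IsResidualDescent f p a θ) (hf : Continuous f)
    (hf' : LocallyLipschitz (∇ f)) (ha : ContinuousOn a (Ici 0)) {γ : ℝ → E}
    (hγ : IsIntegralCurve γ fun _ ↦ ∇ f) (hγ₀ : γ 0 = θ 0) :
    ∃ s : ℝ → ℝ, EqOn θ (γ ∘ s) (Ici 0) := by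
  have hspeed : ContinuousOn (fun t ↦ -(a t * (f (θ t) - p))) (Ici 0) :=
    (ha.mul ((hf.comp_continuousOn (IsIntegralCurveOn.continuousOn hθ)).sub
      continuousOn_const)).neg
  obtain ⟨s, -, -, hs⟩ := exists_eqOn_comp_of_isIntegralCurveOn_smul hf' hspeed
    (fun t ht ↦ hθ.hasDerivWithinAt ht) hγ hγ₀.symm
  exact ⟨s, hs⟩

theorem exists_pos_le_norm_gradient_sq (hθ : IsResidualDescent f p a θ)
    (hsafe : IsSafeInitialization f (θ 0) p) (hf : Differentiable ℝ f)
    (hf' : LocallyLipschitz (∇ f)) (ha : ContinuousOn a (Ici 0)) (ha₀ : ∀ t ∈ Ici 0, 0 ≤ a t) :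
    ∃ m > 0, ∀ t ∈ Ici 0, m ≤ ‖∇ f (θ t)‖ ^ 2 := by
  obtain ⟨hθ₀, γ, hγ₀, hγ, T, hT⟩ := hsafe
  have hne : ∀ u, ∇ f (γ u) ≠ 0 := ne_zero_of_isIntegralCurve hf' hγ (hγ₀ ▸ hθ₀)
  have hmono : StrictMono (f ∘ γ) := strictMono_comp_of_isIntegralCurve_gradient hf hγ hne
  obtain ⟨s, hs⟩ := hθ.exists_eqOn_comp hf.continuous hf' ha hγ hγ₀
  have hs_mem : ∀ t ∈ Ici 0, s t ∈ uIcc 0 T := fun t ht ↦ by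
    have h : (f ∘ γ) (s t) ∈ uIcc ((f ∘ γ) 0) ((f ∘ γ) T) := by
      simpa [hγ₀, hT, hs ht] using hθ.value_mem_uIcc hf hf'.continuous ha ha₀ ht
    rwa [← (OrderEmbedding.ofStrictMono (f ∘ γ) hmono).preimage_uIcc]
  have hcont : Continuous fun u ↦ ‖∇ f (γ u)‖ ^ 2 :=
    (hf'.continuous.comp hγ.continuous).norm.pow 2
  obtain ⟨m, hm₀, hm⟩ := isCompact_uIcc.exists_forall_le' hcont.continuousOn
    fun u _ ↦ pow_pos (norm_pos_iff.2 (hne u)) 2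
  refine ⟨m, hm₀, fun t ht ↦ ?_⟩
  rw [hs ht]
  exact hm (s t) (hs_mem t ht)

theorem tendsto_value_of_le (hθ : IsResidualDescent f p a θ) (hf : Differentiable ℝ f)
    (hf' : Continuous (∇ f)) (ha : ContinuousOn a (Ici 0)) {m₁ m₂ : ℝ} (hm₁ : 0 < m₁)
    (hm₂ : 0 < m₂) (h₁ : ∀ t ∈ Ici 0, m₁ ≤ a t) (h₂ : ∀ t ∈ Ici 0, m₂ ≤ ‖∇ f (θ t)‖ ^ 2) :
    Tendsto (fun t ↦ f (θ t)) atTop (𝓝 p) := by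
  rw [← tendsto_sub_nhds_zero_iff]
  exact tendsto_zero_of_hasDerivWithinAt_neg_mul (ha.mul (hθ.continuousOn_norm_gradient_sq hf'))
    (fun t ht ↦ hθ.hasDerivWithinAt_residual hf ht) (mul_pos hm₁ hm₂)
    fun t ht ↦ mul_le_mul (h₁ t ht) (h₂ t ht) hm₂.le (hm₁.le.trans (h₁ t ht))

end IsResidualDescent

end ResidualDescent

theorem hamiltonian_hidden_bilinear_convergence_general
    {E F : Type*} [NormedAddCommGroup E] [InnerProductSpace ℝ E] [CompleteSpace E]
    [NormedAddCommGroup F] [InnerProductSpace ℝ F] [CompleteSpace F]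
    {f : E → ℝ} {g : F → ℝ} (hf : Differentiable ℝ f) (hf' : LocallyLipschitz (∇ f))
    (hg : Differentiable ℝ g) (hg' : LocallyLipschitz (∇ g)) {p q : ℝ}
    {θ : ℝ → E} {φ : ℝ → F}
    (hθ : IsResidualDescent f p (fun t ↦ ‖∇ g (φ t)‖ ^ 2) θ)
    (hφ : IsResidualDescent g q (fun t ↦ ‖∇ f (θ t)‖ ^ 2) φ)
    (hsafef : IsSafeInitialization f (θ 0) p) (hsafeg : IsSafeInitialization g (φ 0) q) :
    Tendsto (fun t ↦ (f (θ t), g (φ t))) atTop (𝓝 (p, q)) := by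
  have hrate_f := hθ.continuousOn_norm_gradient_sq hf'.continuous
  have hrate_g := hφ.continuousOn_norm_gradient_sq hg'.continuous
  obtain ⟨m₁, hm₁, h₁⟩ :=
    hθ.exists_pos_le_norm_gradient_sq hsafef hf hf' hrate_g fun _ _ ↦ sq_nonneg _
  obtain ⟨m₂, hm₂, h₂⟩ :=
    hφ.exists_pos_le_norm_gradient_sq hsafeg hg hg' hrate_f fun _ _ ↦ sq_nonneg _
  exact (hθ.tendsto_value_of_le hf hf'.continuous hrate_g hm₂ hm₁ h₂ h₁).prodMk_nhds
    (hφ.tendsto_value_of_le hg hg'.continuous hrate_f hm₁ hm₂ h₁ h₂)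

/-- **Convergence of modified Hamiltonian gradient descent in hidden bilinear games:**
for the objective `L(θ,φ) = (f(θ) − p)(g(φ) − q)`, along any safe trajectory of the
dynamics `θ̇ = −∇f(θ)·‖∇g(φ)‖²·(f(θ) − p)`, `φ̇ = −∇g(φ)·‖∇f(θ)‖²·(g(φ) − q)`,
the outputs `(f(θ(t)), g(φ(t)))` converge to `(p, q)`. -/
theorem hamiltonian_hidden_bilinear_convergence
    {N M : ℕ} (f : EuclideanSpace ℝ (Fin N) → ℝ) (g : EuclideanSpace ℝ (Fin M) → ℝ)
    (hf : ContDiff ℝ 2 f) (hg : ContDiff ℝ 2 g) (p q : ℝ)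
    (θ : ℝ → EuclideanSpace ℝ (Fin N)) (φ : ℝ → EuclideanSpace ℝ (Fin M))
    (hθ : ∀ t : ℝ, 0 ≤ t → HasDerivAt θ
      (-((‖gradient g (φ t)‖ ^ 2 * (f (θ t) - p)) • gradient f (θ t))) t)
    (hφ : ∀ t : ℝ, 0 ≤ t → HasDerivAt φ
      (-((‖gradient f (θ t)‖ ^ 2 * (g (φ t) - q)) • gradient g (φ t))) t)
    (hsafef : gradient f (θ 0) ≠ 0 ∧
      ∃ γ : ℝ → EuclideanSpace ℝ (Fin N), γ 0 = θ 0 ∧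
        (∀ t, HasDerivAt γ (gradient f (γ t)) t) ∧ ∃ t, f (γ t) = p)
    (hsafeg : gradient g (φ 0) ≠ 0 ∧
      ∃ γ : ℝ → EuclideanSpace ℝ (Fin M), γ 0 = φ 0 ∧
        (∀ t, HasDerivAt γ (gradient g (γ t)) t) ∧ ∃ t, g (γ t) = q) :
    Filter.Tendsto (fun t => (f (θ t), g (φ t))) Filter.atTop (nhds (p, q)) :=
  hamiltonian_hidden_bilinear_convergence_general
    (hf.differentiable two_ne_zero) (locallyLipschitz_gradient hf)
    (hg.differentiable two_ne_zero) (locallyLipschitz_gradient hg)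
    (fun t ht ↦ (hθ t ht).hasDerivWithinAt) (fun t ht ↦ (hφ t ht).hasDerivWithinAt) hsafef hsafeg
end

section
/- Let N be a nonempty finite set and let p_data, p_G : N → ℝ satisfy p_data(x) > 0 and p_G(x) > 0 for all x ∈ N. Define, for D : N → (0,1), V(D) = Σ_{x∈N} p_data(x)·log(D(x)) + Σ_{x∈N} p_G(x)·log(1 − D(x)), and let D*(x) = p_data(x)/(p_data(x) + p_G(x)). Then D* takes values in (0,1), and for every D : N → (0,1), V(D) ≤ V(D*), with equality if and only if D = D*. -/
open Finset

/-!
Each point `x` contributes to the utility gap `V(D*) - V(D)` its weight `p_data x + p_G x` times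
the Kullback–Leibler divergence of `Bernoulli (D* x)` from `Bernoulli (D x)`. Nonnegativity of that
divergence makes `D*` a pointwise maximizer, its vanishing only on the diagonal makes the maximizer
unique, and both facts survive summation over `x`.
-/

section OrderedField

variable {K : Type*} [Field K] [LinearOrder K] [IsStrictOrderedRing K] {a b : K}

theorem div_add_mem_Icc (ha : 0 ≤ a) (hb : 0 ≤ b) : a / (a + b) ∈ Set.Icc 0 1 :=
  ⟨by positivity, div_le_one_of_le₀ (le_add_of_nonneg_right hb) (by positivity)⟩

theorem div_add_mem_Ioo (ha : 0 < a) (hb : 0 < b) : a / (a + b) ∈ Set.Ioo 0 1 :=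
  ⟨by positivity, (div_lt_one (by positivity)).mpr (lt_add_of_pos_right a hb)⟩

end OrderedField

theorem tsum_eq_tsum_iff_of_le {ι α : Type*} [AddCommGroup α] [PartialOrder α]
    [IsOrderedAddMonoid α] [TopologicalSpace α] [IsTopologicalAddGroup α]
    [OrderClosedTopology α] {f g : ι → α} (hf : Summable f) (hg : Summable g)
    (hfg : ∀ i, f i ≤ g i) : ∑' i, f i = ∑' i, g i ↔ ∀ i, f i = g i := by
  refine ⟨fun h i => (hfg i).eq_of_not_lt fun hi => ?_, tsum_congr⟩
  exact (hf.tsum_lt_tsum hfg hi hg).ne h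

theorem mul_log_div (p : ℝ) {q : ℝ} (hq : q ≠ 0) :
    p * Real.log (p / q) = p * Real.log p - p * Real.log q := by
  rcases eq_or_ne p 0 with rfl | hp
  · simp
  · rw [Real.log_div hp hq, mul_sub]

/-- The Kullback–Leibler divergence of the Bernoulli distribution with parameter `p` from the one
with parameter `q`, with the usual convention `0 * log 0 = 0`; it measures the suboptimality of a
discriminator at a point. Meaningful for `p ∈ [0, 1]` and `q ∈ (0, 1)` only. -/
noncomputable def binKLDiv (p q : ℝ) : ℝ :=
  p * Real.log (p / q) + (1 - p) * Real.log ((1 - p) / (1 - q))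

/-- The contribution to the GAN utility `V` of a point with weight `a` under the data distribution
and weight `b` under the generator, when the discriminator takes the value `d` there. -/
noncomputable def ganUtility (a b d : ℝ) : ℝ :=
  a * Real.log d + b * Real.log (1 - d)

section BinKLDiv

open InformationTheory

variable {p q : ℝ}

theorem binKLDiv_eq_mul_klFun_add (hq₀ : q ≠ 0) (hq₁ : q ≠ 1) :
    binKLDiv p q = q * klFun (p / q) + (1 - q) * klFun ((1 - p) / (1 - q)) := by
  have hq₁' : 1 - q ≠ 0 := sub_ne_zero.mpr hq₁.symm
  simp only [binKLDiv, klFun_apply]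
  field_simp
  ring

theorem binKLDiv_self (p : ℝ) : binKLDiv p p = 0 := by
  simp [binKLDiv, Real.log_div_self]

theorem mul_klFun_div_nonneg (hp : 0 ≤ p) (hq : 0 ≤ q) : 0 ≤ q * klFun (p / q) :=
  mul_nonneg hq (klFun_nonneg (div_nonneg hp hq))

theorem binKLDiv_nonneg (hp : p ∈ Set.Icc 0 1) (hq : q ∈ Set.Ioo 0 1) : 0 ≤ binKLDiv p q := by
  rw [binKLDiv_eq_mul_klFun_add hq.1.ne' hq.2.ne]
  exact add_nonneg (mul_klFun_div_nonneg hp.1 hq.1.le)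
    (mul_klFun_div_nonneg (sub_nonneg.mpr hp.2) (sub_nonneg.mpr hq.2.le))

theorem binKLDiv_eq_zero_iff (hp : p ∈ Set.Icc 0 1) (hq : q ∈ Set.Ioo 0 1) :
    binKLDiv p q = 0 ↔ p = q := by
  refine ⟨fun h => ?_, fun h => h ▸ binKLDiv_self p⟩
  rw [binKLDiv_eq_mul_klFun_add hq.1.ne' hq.2.ne,
    add_eq_zero_iff_of_nonneg (mul_klFun_div_nonneg hp.1 hq.1.le)
      (mul_klFun_div_nonneg (sub_nonneg.mpr hp.2) (sub_nonneg.mpr hq.2.le))] at h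
  have hkl : klFun (p / q) = 0 := (mul_eq_zero_iff_left hq.1.ne').mp h.1
  exact (div_eq_one_iff_eq hq.1.ne').mp
    ((klFun_eq_zero_iff (div_nonneg hp.1 hq.1.le)).mp hkl)

end BinKLDiv

section GanUtility

variable {a b d : ℝ}

theorem ganUtility_nonpos (ha : 0 ≤ a) (hb : 0 ≤ b) (hd : d ∈ Set.Icc 0 1) :
    ganUtility a b d ≤ 0 :=
  add_nonpos (mul_nonpos_of_nonneg_of_nonpos ha (Real.log_nonpos hd.1 hd.2))
    (mul_nonpos_of_nonneg_of_nonpos hb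
      (Real.log_nonpos (sub_nonneg.mpr hd.2) (sub_le_self 1 hd.1)))

theorem ganUtility_div_add_sub_ganUtility (hab : a + b ≠ 0) (hd₀ : d ≠ 0) (hd₁ : d ≠ 1) :
    ganUtility a b (a / (a + b)) - ganUtility a b d = (a + b) * binKLDiv (a / (a + b)) d := by
  set p := a / (a + b)
  have ha : a = (a + b) * p := (mul_div_cancel₀ a hab).symm
  have hb : b = (a + b) * (1 - p) := by linear_combination -ha
  calc ganUtility a b p - ganUtility a b d
      = a * (Real.log p - Real.log d) + b * (Real.log (1 - p) - Real.log (1 - d)) := by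
        simp only [ganUtility]
        ring
    _ = (a + b) * ((p * Real.log p - p * Real.log d) +
          ((1 - p) * Real.log (1 - p) - (1 - p) * Real.log (1 - d))) := by
        linear_combination (Real.log p - Real.log d) * ha +
          (Real.log (1 - p) - Real.log (1 - d)) * hb
    _ = (a + b) * binKLDiv p d := by
        rw [binKLDiv, mul_log_div p hd₀, mul_log_div (1 - p) (sub_ne_zero.mpr hd₁.symm)]

theorem ganUtility_le_ganUtility_div_add (ha : 0 ≤ a) (hb : 0 ≤ b) (hab : a + b ≠ 0)
    (hd : d ∈ Set.Ioo 0 1) : ganUtility a b d ≤ ganUtility a b (a / (a + b)) := by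
  rw [← sub_nonneg, ganUtility_div_add_sub_ganUtility hab hd.1.ne' hd.2.ne]
  exact mul_nonneg (add_nonneg ha hb) (binKLDiv_nonneg (div_add_mem_Icc ha hb) hd)

theorem ganUtility_eq_ganUtility_div_add_iff (ha : 0 ≤ a) (hb : 0 ≤ b) (hab : a + b ≠ 0)
    (hd : d ∈ Set.Ioo 0 1) :
    ganUtility a b d = ganUtility a b (a / (a + b)) ↔ d = a / (a + b) := by
  rw [eq_comm, ← sub_eq_zero, ganUtility_div_add_sub_ganUtility hab hd.1.ne' hd.2.ne,
    mul_eq_zero_iff_left hab, binKLDiv_eq_zero_iff (div_add_mem_Icc ha hb) hd, eq_comm]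

end GanUtility

/-- On an infinite `N` the utility of a discriminator is a series of nonpositive terms, so
summability says that it is finite rather than `-∞`. -/
theorem vanilla_gan_optimal_discriminator_general
    {N : Type*} (pdata pG : N → ℝ) (hpdata : ∀ x, 0 < pdata x) (hpG : ∀ x, 0 < pG x) :
    (∀ x, pdata x / (pdata x + pG x) ∈ Set.Ioo (0 : ℝ) 1) ∧
    ∀ D : N → ℝ, (∀ x, D x ∈ Set.Ioo (0 : ℝ) 1) →
      Summable (fun x => ganUtility (pdata x) (pG x) (D x)) →
      Summable (fun x => ganUtility (pdata x) (pG x) (pdata x / (pdata x + pG x))) ∧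
      (∑' x, ganUtility (pdata x) (pG x) (D x) ≤
        ∑' x, ganUtility (pdata x) (pG x) (pdata x / (pdata x + pG x))) ∧
      (∑' x, ganUtility (pdata x) (pG x) (D x) =
        ∑' x, ganUtility (pdata x) (pG x) (pdata x / (pdata x + pG x)) ↔
        D = fun x => pdata x / (pdata x + pG x)) := by
  refine ⟨fun x => div_add_mem_Ioo (hpdata x) (hpG x), fun D hD hV => ?_⟩
  have hsum x : pdata x + pG x ≠ 0 := (add_pos (hpdata x) (hpG x)).ne'
  have hle x := ganUtility_le_ganUtility_div_add (hpdata x).le (hpG x).le (hsum x) (hD x)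
  have hnonpos x := ganUtility_nonpos (hpdata x).le (hpG x).le
    (div_add_mem_Icc (hpdata x).le (hpG x).le)
  have hVopt : Summable fun x => ganUtility (pdata x) (pG x) (pdata x / (pdata x + pG x)) :=
    .of_neg (.of_nonneg_of_le (fun x => neg_nonneg.mpr (hnonpos x))
      (fun x => neg_le_neg (hle x)) hV.neg)
  refine ⟨hVopt, hV.tsum_le_tsum hle hVopt, ?_⟩
  rw [tsum_eq_tsum_iff_of_le hV hVopt hle, funext_iff]
  exact forall_congr' fun x =>
    ganUtility_eq_ganUtility_div_add_iff (hpdata x).le (hpG x).le (hsum x) (hD x)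

/-- **Optimal discriminator for the vanilla GAN:** the discriminator
`D*(x) = p_data(x)/(p_data(x) + p_G(x))` takes values in `(0,1)` and is the unique
maximizer of the GAN utility `V` among discriminators valued in `(0,1)`. -/
theorem vanilla_gan_optimal_discriminator
    {N : Type*} [Fintype N] [Nonempty N]
    (pdata pG : N → ℝ) (hpdata : ∀ x, 0 < pdata x) (hpG : ∀ x, 0 < pG x) :
    (∀ x, pdata x / (pdata x + pG x) ∈ Set.Ioo (0:ℝ) 1) ∧
    ∀ D : N → ℝ, (∀ x, D x ∈ Set.Ioo (0:ℝ) 1) →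
      (∑ x, pdata x * Real.log (D x) + ∑ x, pG x * Real.log (1 - D x) ≤
        ∑ x, pdata x * Real.log (pdata x / (pdata x + pG x)) +
          ∑ x, pG x * Real.log (1 - pdata x / (pdata x + pG x))) ∧
      ((∑ x, pdata x * Real.log (D x) + ∑ x, pG x * Real.log (1 - D x) =
        ∑ x, pdata x * Real.log (pdata x / (pdata x + pG x)) +
          ∑ x, pG x * Real.log (1 - pdata x / (pdata x + pG x))) ↔
        D = fun x => pdata x / (pdata x + pG x)) := by
  obtain ⟨hopt, hmax⟩ := vanilla_gan_optimal_discriminator_general pdata pG hpdata hpG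
  refine ⟨hopt, fun D hD => ?_⟩
  simpa only [tsum_fintype, ganUtility, sum_add_distrib] using (hmax D hD .of_finite).2
end

section
/- Let f : ℝ → ℝ be differentiable and strictly convex, let a, b > 0, and set v₀ = f'(a/b). For v ∈ ℝ let S_v = {u·v − f(u) : u ∈ ℝ}. Then: (i) S_{v₀} is bounded above and sSup S_{v₀} = (a/b)·v₀ − f(a/b), attained at u = a/b; (ii) a·v₀ − b·sSup S_{v₀} = b·f(a/b); and (iii) for every v ∈ ℝ such that S_v is bounded above, a·v − b·sSup S_v ≤ b·f(a/b) = a·v₀ − b·sSup S_{v₀}. In other words, v₀ = f'(a/b) maximizes v ↦ a·v − b·f*(v), where f*(v) = sSup S_v is the convex conjugate of f. -/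
/-!
The tangent hyperplane at `x = b⁻¹ • a` lies below the graph of the convex function `f`, which says
exactly that the supremum defining `f*(f'(x))` is attained at `x`. Hence the Fenchel–Young
inequality `φ x - f*(φ) ≤ f x` is an equality at `φ = f'(x)`, and so is its multiple by `b`.
-/

open AffineMap Set

section Conjugate

variable {E : Type*} [AddCommGroup E] [Module ℝ E]
  {s : Set E} {f : E → ℝ} {φ : Module.Dual ℝ E} {x : E}

/-- The set of values `φ u - f u` for `u ∈ s`, whose supremum is the convex conjugate at `φ` of the
function equal to `f` on `s` and to `+∞` elsewhere. -/
def conjugateValues (s : Set E) (f : E → ℝ) (φ : Module.Dual ℝ E) : Set ℝ :=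
  (fun u ↦ φ u - f u) '' s

/-- The convex conjugate `f*(φ)` of the function equal to `f` on `s` and to `+∞` elsewhere. It is
real-valued, so it carries the junk value `0` where the true conjugate is infinite. -/
noncomputable def conjugateOn (s : Set E) (f : E → ℝ) (φ : Module.Dual ℝ E) : ℝ :=
  sSup (conjugateValues s f φ)

/-- The linear functional `φ` is a subgradient of `f` on `s` at `x`: the affine function with
linear part `φ` agreeing with `f` at `x` stays below `f` on `s`. -/
def IsSubgradientOn (s : Set E) (f : E → ℝ) (φ : Module.Dual ℝ E) (x : E) : Prop :=
  ∀ u ∈ s, f x + φ (u - x) ≤ f u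

theorem apply_sub_le_conjugateOn (hx : x ∈ s) (hφ : BddAbove (conjugateValues s f φ)) :
    φ x - f x ≤ conjugateOn s f φ :=
  le_csSup hφ (mem_image_of_mem _ hx)

theorem IsSubgradientOn.isGreatest_conjugateValues (h : IsSubgradientOn s f φ x) (hx : x ∈ s) :
    IsGreatest (conjugateValues s f φ) (φ x - f x) := by
  refine ⟨mem_image_of_mem _ hx, forall_mem_image.2 fun u hu ↦ ?_⟩
  have hu' : f x + φ (u - x) ≤ f u := h u hu
  rw [map_sub] at hu'
  linarith

theorem IsSubgradientOn.conjugateOn_eq (h : IsSubgradientOn s f φ x) (hx : x ∈ s) :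
    conjugateOn s f φ = φ x - f x :=
  (h.isGreatest_conjugateValues hx).csSup_eq

theorem apply_sub_mul_apply_inv_smul_sub (φ : Module.Dual ℝ E) (a : E) {b : ℝ} (hb : b ≠ 0)
    (c : ℝ) : φ a - b * (φ (b⁻¹ • a) - c) = b * c := by
  rw [map_smul, smul_eq_mul, mul_sub, mul_inv_cancel_left₀ hb, sub_sub_cancel]

theorem apply_sub_mul_conjugateOn_le {a : E} {b : ℝ} (hb : 0 < b) (ha : b⁻¹ • a ∈ s)
    (hφ : BddAbove (conjugateValues s f φ)) :
    φ a - b * conjugateOn s f φ ≤ b * f (b⁻¹ • a) :=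
  calc φ a - b * conjugateOn s f φ
    _ ≤ φ a - b * (φ (b⁻¹ • a) - f (b⁻¹ • a)) := by
      gcongr
      exact apply_sub_le_conjugateOn ha hφ
    _ = b * f (b⁻¹ • a) := apply_sub_mul_apply_inv_smul_sub φ a hb.ne' _

theorem IsSubgradientOn.apply_sub_mul_conjugateOn_eq {a : E} {b : ℝ}
    (h : IsSubgradientOn s f φ (b⁻¹ • a)) (hb : b ≠ 0) (ha : b⁻¹ • a ∈ s) :
    φ a - b * conjugateOn s f φ = b * f (b⁻¹ • a) := by
  rw [h.conjugateOn_eq ha, apply_sub_mul_apply_inv_smul_sub φ a hb]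

theorem conjugateValues_univ_toSpanSingleton (f : ℝ → ℝ) (v : ℝ) :
    conjugateValues univ f (LinearMap.toSpanSingleton ℝ ℝ v) = {z | ∃ u : ℝ, z = u * v - f u} := by
  ext z
  simp [conjugateValues, eq_comm]

end Conjugate

section Derivative

variable {E : Type*} [NormedAddCommGroup E] [NormedSpace ℝ E]
  {s : Set E} {f : E → ℝ} {f' : E →L[ℝ] ℝ}

theorem isSubgradientOn_of_convexOn_of_hasFDerivWithinAt {x : E} (hf : ConvexOn ℝ s f)
    (hx : x ∈ s) (hf' : HasFDerivWithinAt f f' s x) : IsSubgradientOn s f f' x := by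
  intro u hu
  let ℓ : ℝ →ᵃ[ℝ] E := lineMap x u
  have hℓ0 : ℓ 0 = x := lineMap_apply_zero x u
  have hℓ1 : ℓ 1 = u := lineMap_apply_one x u
  have hderiv : HasDerivWithinAt (f ∘ ℓ) (f' (u - x)) (ℓ ⁻¹' s) 0 :=
    hf'.comp_hasDerivWithinAt_of_eq 0 hasDerivWithinAt_lineMap (mapsTo_preimage ℓ s) hℓ0.symm
  have hslope : f' (u - x) ≤ slope (f ∘ ℓ) 0 1 :=
    (hf.comp_affineMap ℓ).le_slope_of_hasDerivWithinAt (by simpa [hℓ0]) (by simpa [hℓ1])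
      zero_lt_one hderiv
  have hsub : slope (f ∘ ℓ) 0 1 = f u - f x := by simp [slope_def_field, hℓ0, hℓ1]
  simpa [add_comm] using le_sub_iff_add_le.1 (hslope.trans_eq hsub)

theorem fgan_optimal_discriminator_coordinate_general {a : E} {b : ℝ} (hf : ConvexOn ℝ s f)
    (hb : 0 < b) (ha : b⁻¹ • a ∈ s) (hf' : HasFDerivWithinAt f f' s (b⁻¹ • a)) :
    IsGreatest (conjugateValues s f f') (f' (b⁻¹ • a) - f (b⁻¹ • a)) ∧
    conjugateOn s f f' = f' (b⁻¹ • a) - f (b⁻¹ • a) ∧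
    f' a - b * conjugateOn s f f' = b * f (b⁻¹ • a) ∧
    ∀ φ : Module.Dual ℝ E, BddAbove (conjugateValues s f φ) →
      φ a - b * conjugateOn s f φ ≤ b * f (b⁻¹ • a) :=
  have h : IsSubgradientOn s f f' (b⁻¹ • a) :=
    isSubgradientOn_of_convexOn_of_hasFDerivWithinAt hf ha hf'
  ⟨h.isGreatest_conjugateValues ha, h.conjugateOn_eq ha, h.apply_sub_mul_conjugateOn_eq hb.ne' ha,
    fun _ hφ ↦ apply_sub_mul_conjugateOn_le hb ha hφ⟩

end Derivative

/-- **Optimal f-GAN discriminator coordinate:** for a differentiable strictly convex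
`f` and `a, b > 0`, the value `v₀ = f'(a/b)` maximizes `v ↦ a·v − b·f*(v)`, where
`f*(v) = sSup {u·v − f(u)}` is the convex conjugate of `f`; the supremum defining
`f*(v₀)` is attained at `u = a/b`, and the maximal value is `b·f(a/b)`. -/
theorem fgan_optimal_discriminator_coordinate
    (f : ℝ → ℝ) (hf : Differentiable ℝ f) (hconv : StrictConvexOn ℝ Set.univ f)
    (a b : ℝ) (ha : 0 < a) (hb : 0 < b) :
    IsGreatest {z | ∃ u : ℝ, z = u * deriv f (a / b) - f u}
      (a / b * deriv f (a / b) - f (a / b)) ∧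
    sSup {z | ∃ u : ℝ, z = u * deriv f (a / b) - f u} =
      a / b * deriv f (a / b) - f (a / b) ∧
    a * deriv f (a / b) - b * sSup {z | ∃ u : ℝ, z = u * deriv f (a / b) - f u} =
      b * f (a / b) ∧
    ∀ v : ℝ, BddAbove {z | ∃ u : ℝ, z = u * v - f u} →
      a * v - b * sSup {z | ∃ u : ℝ, z = u * v - f u} ≤ b * f (a / b) := by
  have h := fgan_optimal_discriminator_coordinate_general hconv.convexOn hb (mem_univ _)
    (hf (b⁻¹ • a)).hasDerivAt.hasFDerivAt.hasFDerivWithinAt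
  simp only [conjugateOn, ContinuousLinearMap.toLinearMap_toSpanSingleton,
    conjugateValues_univ_toSpanSingleton, ContinuousLinearMap.toSpanSingleton_apply, smul_eq_mul,
    inv_mul_eq_div] at h
  obtain ⟨hgreatest, hsup, hvalue, hle⟩ := h
  refine ⟨hgreatest, hsup, hvalue, fun v ↦ ?_⟩
  simpa [conjugateValues_univ_toSpanSingleton] using hle (LinearMap.toSpanSingleton ℝ ℝ v)
end

section
/- Let N be a nonempty finite set equipped with a metric dist, and let p_data : N → ℝ be a probability distribution on N. For D : N → ℝ and a probability distribution p_G on N define V(p_G, D) = Σ_{x∈N} (p_data(x) − p_G(x))·D(x), and let D_max = max_{x∈N} D(x). Then: (i) for every D : N → ℝ and every probability distribution p_G, V(p_G, D) ≥ Σ_{x∈N} p_data(x)·D(x) − D_max, with equality if and only if p_G is supported on {x : D(x) = D_max}; consequently inf over probability distributions p_G of V(p_G,D) equals Σ p_data(x)D(x) − D_max ≤ 0; (ii) for every constant function D and every probability distribution p_G, V(p_G,D) = 0. Hence the max-min value sup over 1-Lipschitz D : N → ℝ of inf over probability distributions p_G of V(p_G,D) equals 0, and it is attained by constant discriminators (which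 are 1-Lipschitz). -/
open Finset

/-!
If `q` is a probability vector and `M` bounds `D` from above, then
`M - ∑ q x * D x = ∑ q x * (M - D x)` is a sum of nonnegative terms, which vanishes exactly when `q`
lives on `{x | D x = M}`. Taking `M = D_max`, the generator's best response puts all its mass on the
argmax of `D` and leaves `∑ p x * D x - D_max`. The same inequality for `q = p` makes this value
nonpositive, while a constant discriminator achieves `0`.
-/

section Averages

variable {ι 𝕜 : Type*} [Fintype ι]

theorem sub_dotProduct_eq_sum_mul_sub [NonAssocRing 𝕜] {q : ι → 𝕜} (hq : ∑ x, q x = 1)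
    (D : ι → 𝕜) (M : 𝕜) : M - q ⬝ᵥ D = ∑ x, q x * (M - D x) := by
  simp only [dotProduct, mul_sub, sum_sub_distrib, ← sum_mul, hq, one_mul]

theorem dotProduct_le_of_mem_stdSimplex [Ring 𝕜] [PartialOrder 𝕜] [IsOrderedRing 𝕜]
    {q D : ι → 𝕜} {M : 𝕜} (hq : q ∈ stdSimplex 𝕜 ι) (hD : ∀ x, D x ≤ M) : q ⬝ᵥ D ≤ M := by
  rw [← sub_nonneg, sub_dotProduct_eq_sum_mul_sub hq.2]
  exact sum_nonneg fun x _ => mul_nonneg (hq.1 x) (sub_nonneg.2 (hD x))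

theorem dotProduct_eq_iff_of_mem_stdSimplex [Ring 𝕜] [PartialOrder 𝕜] [IsOrderedRing 𝕜]
    [NoZeroDivisors 𝕜] {q D : ι → 𝕜} {M : 𝕜} (hq : q ∈ stdSimplex 𝕜 ι) (hD : ∀ x, D x ≤ M) :
    q ⬝ᵥ D = M ↔ ∀ x, D x ≠ M → q x = 0 := by
  have hterm : ∀ x ∈ univ, 0 ≤ q x * (M - D x) := fun x _ =>
    mul_nonneg (hq.1 x) (sub_nonneg.2 (hD x))
  rw [eq_comm, ← sub_eq_zero, sub_dotProduct_eq_sum_mul_sub hq.2, sum_eq_zero_iff_of_nonneg hterm]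
  refine forall_congr' fun x => ?_
  simp only [mem_univ, true_imp_iff, mul_eq_zero, sub_eq_zero, eq_comm (a := M)]
  exact or_comm.trans or_iff_not_imp_left

theorem isGreatest_dotProduct_image_stdSimplex [Nonempty ι] [Ring 𝕜] [LinearOrder 𝕜]
    [IsOrderedRing 𝕜] (D : ι → 𝕜) :
    IsGreatest ((· ⬝ᵥ D) '' stdSimplex 𝕜 ι) (univ.sup' univ_nonempty D) := by
  classical
  constructor
  · obtain ⟨x₀, -, hx₀⟩ := exists_mem_eq_sup' univ_nonempty D
    exact ⟨Pi.single x₀ 1, single_mem_stdSimplex 𝕜 x₀, by simp only [single_one_dotProduct, hx₀]⟩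
  · rintro _ ⟨q, hq, rfl⟩
    exact dotProduct_le_of_mem_stdSimplex hq fun x => le_sup' D (mem_univ x)

end Averages

section Utility

variable {ι 𝕜 : Type*} [Fintype ι]

/-- The WGAN utility `V(G, D) = E_p[D] - E_q[D]` of the discriminator `D`, for the data distribution
`p` and the generated distribution `q`, both encoded as weight vectors. -/
def wganUtility [NonUnitalNonAssocRing 𝕜] (p q D : ι → 𝕜) : 𝕜 :=
  ∑ x, (p x - q x) * D x

theorem wganUtility_eq_sub [NonUnitalNonAssocRing 𝕜] (p q D : ι → 𝕜) :
    wganUtility p q D = p ⬝ᵥ D - q ⬝ᵥ D :=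
  sub_dotProduct p q D

theorem wganUtility_self [NonUnitalNonAssocRing 𝕜] (p D : ι → 𝕜) : wganUtility p p D = 0 := by
  rw [wganUtility_eq_sub, sub_self]

theorem wganUtility_const [NonUnitalNonAssocRing 𝕜] {p q : ι → 𝕜}
    (hpq : ∑ x, p x = ∑ x, q x) (c : 𝕜) : wganUtility p q (fun _ => c) = 0 := by
  rw [wganUtility, ← sum_mul, sum_sub_distrib, hpq, sub_self, zero_mul]

theorem isLeast_wganUtility_image_stdSimplex [Nonempty ι] [Ring 𝕜] [LinearOrder 𝕜]
    [IsOrderedRing 𝕜] (p D : ι → 𝕜) :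
    IsLeast ((wganUtility p · D) '' stdSimplex 𝕜 ι) (p ⬝ᵥ D - univ.sup' univ_nonempty D) := by
  have hanti : Antitone (p ⬝ᵥ D - ·) := fun _ _ h => sub_le_sub_left h _
  simpa only [Set.image_image, ← wganUtility_eq_sub] using
    hanti.map_isGreatest (isGreatest_dotProduct_image_stdSimplex D)

theorem wganUtility_eq_iff_of_mem_stdSimplex [Nonempty ι] [Ring 𝕜] [LinearOrder 𝕜]
    [IsOrderedRing 𝕜] [NoZeroDivisors 𝕜] (p : ι → 𝕜) {q : ι → 𝕜} (hq : q ∈ stdSimplex 𝕜 ι)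
    (D : ι → 𝕜) :
    wganUtility p q D = p ⬝ᵥ D - univ.sup' univ_nonempty D ↔
      ∀ x, D x ≠ univ.sup' univ_nonempty D → q x = 0 := by
  rw [wganUtility_eq_sub, sub_right_inj]
  exact dotProduct_eq_iff_of_mem_stdSimplex hq fun x => le_sup' D (mem_univ x)

end Utility

section MaxMin

variable {N : Type*} [Fintype N] {p : N → ℝ}

/-- The utility that the discriminator `D` secures against the generator's best response: the inner
infimum of the max-min problem, over all probability vectors on `N`. -/
noncomputable def wganMinUtility (p D : N → ℝ) : ℝ :=
  sInf ((wganUtility p · D) '' stdSimplex ℝ N)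

theorem wganMinUtility_eq [Nonempty N] (p D : N → ℝ) :
    wganMinUtility p D = p ⬝ᵥ D - univ.sup' univ_nonempty D :=
  (isLeast_wganUtility_image_stdSimplex p D).csInf_eq

theorem wganMinUtility_nonpos [Nonempty N] (hp : p ∈ stdSimplex ℝ N) (D : N → ℝ) :
    wganMinUtility p D ≤ 0 := by
  rw [wganMinUtility_eq, ← wganUtility_self p D]
  exact (isLeast_wganUtility_image_stdSimplex p D).2 ⟨p, hp, rfl⟩

theorem wganMinUtility_const [Nonempty N] (hp : ∑ x, p x = 1) (c : ℝ) :
    wganMinUtility p (fun _ => c) = 0 := by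
  rw [wganMinUtility_eq, sup'_const, dotProduct, ← sum_mul, hp, one_mul, sub_self]

theorem isGreatest_wganMinUtility_image [Nonempty N] (hp : p ∈ stdSimplex ℝ N)
    {𝓕 : Set (N → ℝ)} {c : ℝ} (hc : (fun _ => c) ∈ 𝓕) :
    IsGreatest (wganMinUtility p '' 𝓕) 0 := by
  refine ⟨⟨_, hc, wganMinUtility_const hp.2 c⟩, ?_⟩
  rintro _ ⟨D, -, rfl⟩
  exact wganMinUtility_nonpos hp D

theorem wgan_maxmin_general [Nonempty N] (hp : p ∈ stdSimplex ℝ N)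
    {𝓕 : Set (N → ℝ)} {c : ℝ} (hc : (fun _ => c) ∈ 𝓕) :
    (∀ D : N → ℝ, ∀ q ∈ stdSimplex ℝ N,
      p ⬝ᵥ D - univ.sup' univ_nonempty D ≤ wganUtility p q D ∧
      (wganUtility p q D = p ⬝ᵥ D - univ.sup' univ_nonempty D ↔
        ∀ x, D x ≠ univ.sup' univ_nonempty D → q x = 0)) ∧
    (∀ D : N → ℝ,
      wganMinUtility p D = p ⬝ᵥ D - univ.sup' univ_nonempty D ∧
      p ⬝ᵥ D - univ.sup' univ_nonempty D ≤ 0) ∧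
    (∀ a : ℝ, ∀ q ∈ stdSimplex ℝ N, wganUtility p q (fun _ => a) = 0) ∧
    IsGreatest (wganMinUtility p '' 𝓕) 0 :=
  ⟨fun D q hq => ⟨(isLeast_wganUtility_image_stdSimplex p D).2 ⟨q, hq, rfl⟩,
      wganUtility_eq_iff_of_mem_stdSimplex p hq D⟩,
    fun D => ⟨wganMinUtility_eq p D, wganMinUtility_eq p D ▸ wganMinUtility_nonpos hp D⟩,
    fun a _ hq => wganUtility_const (hp.2.trans hq.2.symm) a,
    isGreatest_wganMinUtility_image hp hc⟩

end MaxMin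

/-- **WGAN max-min analysis over a finite metric space:** with
`V(p_G, D) = ∑ (p_data − p_G)·D`, (i) for fixed `D` the generator's best response
pushes `V` down to `∑ p_data·D − D_max` (attained exactly by distributions supported on
the argmax of `D`), a quantity that is `≤ 0`; (ii) constant discriminators give `V = 0`
against every generator and are 1-Lipschitz; hence the max-min value over 1-Lipschitz
discriminators is `0`. -/
theorem wgan_maxmin
    {N : Type*} [Fintype N] [Nonempty N] [MetricSpace N]
    (pdata : N → ℝ) (h1 : ∀ x, 0 ≤ pdata x) (h2 : ∑ x, pdata x = 1) :
    (∀ D : N → ℝ, ∀ pG : N → ℝ, (∀ x, 0 ≤ pG x) → ∑ x, pG x = 1 →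
      (∑ x, pdata x * D x - Finset.univ.sup' Finset.univ_nonempty D ≤
        ∑ x, (pdata x - pG x) * D x) ∧
      (∑ x, (pdata x - pG x) * D x =
          ∑ x, pdata x * D x - Finset.univ.sup' Finset.univ_nonempty D ↔
        ∀ x, D x ≠ Finset.univ.sup' Finset.univ_nonempty D → pG x = 0)) ∧
    (∀ D : N → ℝ,
      sInf ((fun pG : N → ℝ => ∑ x, (pdata x - pG x) * D x) ''
          {pG | (∀ x, 0 ≤ pG x) ∧ ∑ x, pG x = 1}) =
        ∑ x, pdata x * D x - Finset.univ.sup' Finset.univ_nonempty D ∧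
      ∑ x, pdata x * D x - Finset.univ.sup' Finset.univ_nonempty D ≤ 0) ∧
    (∀ c : ℝ, ∀ pG : N → ℝ, (∀ x, 0 ≤ pG x) → ∑ x, pG x = 1 →
      ∑ x, (pdata x - pG x) * c = 0) ∧
    (∀ c : ℝ, LipschitzWith 1 (fun _ : N => c)) ∧
    sSup ((fun D : N → ℝ =>
        sInf ((fun pG : N → ℝ => ∑ x, (pdata x - pG x) * D x) ''
          {pG | (∀ x, 0 ≤ pG x) ∧ ∑ x, pG x = 1})) ''
      {D : N → ℝ | LipschitzWith 1 D}) = 0 := by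
  have hlip (c : ℝ) : LipschitzWith 1 (fun _ : N => c) := (LipschitzWith.const c).weaken zero_le_one
  obtain ⟨hbound, hmin, hconst, hmax⟩ :=
    wgan_maxmin_general ⟨h1, h2⟩ (𝓕 := {D | LipschitzWith 1 D}) (hlip 0)
  exact ⟨fun D q h0 hsum => hbound D q ⟨h0, hsum⟩, hmin,
    fun c q h0 hsum => hconst c q ⟨h0, hsum⟩, hlip, hmax.csSup_eq⟩
end
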